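/- arXiv:1510.06249 — 2 statements merged into one kernel-verified Lean document; each statement's English description precedes it below -/
import Mathlib

section
/- Let K be a p-adic field containing the p-th roots of unity with absolute ramification index e_K, and let κ ∈ K^× with ord_{π_K}(κ) not divisible by p. Then L = K(κ^{1/p}) is a totally ramified cyclic extension of degree p with abelian conductor exponent f(L/K) = p·e_K/(p−1) + 1, and this is the maximal possible conductor exponent for cyclic degree-p extensions of K. -/
universe v

/-- An (additive) normalized discrete valuation on `K`. -/
def IsNormalizedVal (p : ℕ) (K : Type*) [Field K] (v : K → ℤ) : Prop :=
  (∀ x y : K, x ≠ 0 → y ≠ 0 → v (x * y) = v x + v y) ∧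
  (∀ x y : K, x ≠ 0 → y ≠ 0 → x + y ≠ 0 → min (v x) (v y) ≤ v (x + y)) ∧
  (∃ π : K, π ≠ 0 ∧ v π = 1) ∧
  (0 < v ((p : K)))

/-- The abelian conductor exponent of `L/K`, defined via norm groups: the smallest `n ≥ 0`
such that `U_K^{(n)}` is contained in the image of the norm map `N_{L/K}`. -/
noncomputable def condExp {K : Type*} [Field K] (vK : K → ℤ)
    (L : Type v) [Field L] [Algebra K L] : ℕ :=
  sInf {n : ℕ | ∀ u : K, u ≠ 0 → vK u = 0 →
    (n = 0 ∨ u = 1 ∨ (n : ℤ) ≤ vK (u - 1)) →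
      ∃ x : L, x ≠ 0 ∧ Algebra.norm K x = u}


namespace KummerCond

/-- The filtration attached to a valuation. -/
def Fil {K : Type*} [Field K] (v : K → ℤ) (n : ℤ) (x : K) : Prop := x = 0 ∨ n ≤ v x

section basic
variable {p : ℕ} {K : Type*} [Field K] {v : K → ℤ}

theorem v_mul (h : IsNormalizedVal p K v) {x y : K} (hx : x ≠ 0) (hy : y ≠ 0) :
    v (x * y) = v x + v y := h.1 x y hx hy

theorem v_one (h : IsNormalizedVal p K v) : v 1 = 0 := by
  have := v_mul h (one_ne_zero (α := K)) one_ne_zero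
  rw [mul_one] at this; omega

theorem v_pow (h : IsNormalizedVal p K v) {x : K} (hx : x ≠ 0) (n : ℕ) :
    v (x ^ n) = n * v x := by
  induction n with
  | zero => simp [v_one h]
  | succ n ih => rw [pow_succ, v_mul h (pow_ne_zero _ hx) hx, ih]; push_cast; ring

theorem v_neg_one (h : IsNormalizedVal p K v) : v (-1) = 0 := by
  have := v_pow h (neg_ne_zero.2 (one_ne_zero (α := K))) 2
  rw [neg_one_sq, v_one h] at this; push_cast at this; omega

theorem v_neg (h : IsNormalizedVal p K v) (x : K) : v (-x) = v x := by
  by_cases hx : x = 0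
  · simp [hx]
  · rw [← neg_one_mul, v_mul h (neg_ne_zero.2 one_ne_zero) hx, v_neg_one h, zero_add]

theorem v_inv (h : IsNormalizedVal p K v) {x : K} (hx : x ≠ 0) : v x⁻¹ = - v x := by
  have := v_mul h hx (inv_ne_zero hx)
  rw [mul_inv_cancel₀ hx, v_one h] at this; omega

theorem v_div (h : IsNormalizedVal p K v) {x y : K} (hx : x ≠ 0) (hy : y ≠ 0) :
    v (x / y) = v x - v y := by
  rw [div_eq_mul_inv, v_mul h hx (inv_ne_zero hy), v_inv h hy]; ring

theorem v_zpow (h : IsNormalizedVal p K v) {x : K} (hx : x ≠ 0) (n : ℤ) :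
    v (x ^ n) = n * v x := by
  obtain ⟨n, rfl | rfl⟩ := n.eq_nat_or_neg
  · simp [v_pow h hx]
  · rw [zpow_neg, v_inv h (zpow_ne_zero _ hx)]; simp [v_pow h hx]

theorem fil_zero (n : ℤ) : Fil v n 0 := Or.inl rfl

theorem fil_mono {m n : ℤ} (hmn : m ≤ n) {x : K} (hx : Fil v n x) : Fil v m x :=
  hx.imp id (fun h => hmn.trans h)

theorem fil_add (h : IsNormalizedVal p K v) {n : ℤ} {x y : K} (hx : Fil v n x) (hy : Fil v n y) :
    Fil v n (x + y) := by
  rcases eq_or_ne x 0 with rfl | hx0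
  · simpa using hy
  rcases eq_or_ne y 0 with rfl | hy0
  · simpa using hx
  rcases eq_or_ne (x + y) 0 with h0 | h0
  · exact Or.inl h0
  · have := h.2.1 x y hx0 hy0 h0
    have h1 := hx.resolve_left hx0
    have h2 := hy.resolve_left hy0
    exact Or.inr (by omega)

theorem fil_neg (h : IsNormalizedVal p K v) {n : ℤ} {x : K} (hx : Fil v n x) : Fil v n (-x) := by
  rcases hx with rfl | hx
  · left; simp
  · right; rwa [v_neg h]

theorem fil_sub (h : IsNormalizedVal p K v) {n : ℤ} {x y : K} (hx : Fil v n x) (hy : Fil v n y) :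
    Fil v n (x - y) := by rw [sub_eq_add_neg]; exact fil_add h hx (fil_neg h hy)

theorem fil_mul (h : IsNormalizedVal p K v) {m n : ℤ} {x y : K} (hx : Fil v m x)
    (hy : Fil v n y) : Fil v (m + n) (x * y) := by
  rcases eq_or_ne x 0 with rfl | hx0
  · left; simp
  rcases eq_or_ne y 0 with rfl | hy0
  · left; simp
  right; rw [v_mul h hx0 hy0]
  have h1 := hx.resolve_left hx0
  have h2 := hy.resolve_left hy0
  omega

theorem fil_one (h : IsNormalizedVal p K v) : Fil v 0 (1 : K) := Or.inr (v_one h).ge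

theorem fil_pow (h : IsNormalizedVal p K v) {m : ℤ} {x : K} (hx : Fil v m x) (n : ℕ) :
    Fil v (n * m) (x ^ n) := by
  induction n with
  | zero => simpa using fil_one h
  | succ n ih =>
    rw [pow_succ]
    have := fil_mul h ih hx
    convert this using 1; push_cast; ring

theorem fil_sum (h : IsNormalizedVal p K v) {n : ℤ} {ι : Type*} (s : Finset ι) (f : ι → K)
    (hf : ∀ i ∈ s, Fil v n (f i)) : Fil v n (∑ i ∈ s, f i) := by
  classical
  induction s using Finset.induction_on with
  | empty => simpa using fil_zero n
  | insert a s ha ih =>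
    rw [Finset.sum_insert ha]
    exact fil_add h (hf _ (by simp)) (ih fun i hi => hf i (by simp [hi]))

theorem fil_natCast (h : IsNormalizedVal p K v) (n : ℕ) : Fil v 0 (n : K) := by
  induction n with
  | zero => simpa using fil_zero 0
  | succ n ih => push_cast; exact fil_add h ih (fil_one h)

theorem fil_self (x : K) : Fil v (v x) x := Or.inr le_rfl

theorem not_fil {x : K} (hx : x ≠ 0) {n : ℤ} (hn : v x < n) : ¬ Fil v n x := by
  rintro (h | h)
  · exact hx h
  · omega

theorem v_add_eq (h : IsNormalizedVal p K v) {x y : K} (hx : x ≠ 0) (hy : Fil v (v x + 1) y) :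
    x + y ≠ 0 ∧ v (x + y) = v x := by
  have key : ¬ Fil v (v x + 1) (x + y) := fun h1 => by
    have := fil_sub h h1 hy
    rw [add_sub_cancel_right] at this
    exact not_fil hx (by omega) this
  have h0 : x + y ≠ 0 := fun h0 => key (Or.inl h0)
  refine ⟨h0, ?_⟩
  have h2 := (fil_add h (fil_self (v := v) x) (fil_mono (by omega) hy)).resolve_left h0
  have h3 : ¬ (v x + 1 ≤ v (x + y)) := fun h3 => key (Or.inr h3)
  omega

/-- one-units -/
theorem unit_of_fil (h : IsNormalizedVal p K v) {n : ℤ} (hn : 0 < n) {x : K}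
    (hx : Fil v n (x - 1)) : x ≠ 0 ∧ v x = 0 := by
  have := v_add_eq h (one_ne_zero (α := K)) (y := x - 1)
    (by rw [v_one h]; exact fil_mono (by omega) hx)
  simpa [v_one h] using this

theorem one_fil_mul (h : IsNormalizedVal p K v) {n : ℤ} (hn : 0 ≤ n) {x y : K}
    (hx : Fil v n (x - 1)) (hy : Fil v n (y - 1)) : Fil v n (x * y - 1) := by
  have : x * y - 1 = (x - 1) * (y - 1) + (x - 1) + (y - 1) := by ring
  rw [this]
  exact fil_add h (fil_add h (fil_mono (by omega) (fil_mul h hx hy)) hx) hy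

theorem one_fil_inv (h : IsNormalizedVal p K v) {n : ℤ} (hn : 0 < n) {x : K}
    (hx : Fil v n (x - 1)) : Fil v n (x⁻¹ - 1) := by
  obtain ⟨h0, h1⟩ := unit_of_fil h hn hx
  have : x⁻¹ - 1 = -((x - 1) * x⁻¹) := by field_simp; ring
  rw [this]
  have h2 : Fil v 0 x⁻¹ := Or.inr (by rw [v_inv h h0, h1]; simp)
  simpa using fil_neg h (fil_mul h hx h2)

theorem one_fil_div (h : IsNormalizedVal p K v) {n : ℤ} (hn : 0 < n) {x y : K}
    (hx : Fil v n (x - 1)) (hy : Fil v n (y - 1)) : Fil v n (x / y - 1) := by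
  rw [div_eq_mul_inv]; exact one_fil_mul h hn.le hx (one_fil_inv h hn hy)

theorem one_fil_prod (h : IsNormalizedVal p K v) {n : ℤ} (hn : 0 ≤ n) {ι : Type*} (s : Finset ι)
    (f : ι → K) (hf : ∀ i ∈ s, Fil v n (f i - 1)) : Fil v n (∏ i ∈ s, f i - 1) := by
  classical
  induction s using Finset.induction_on with
  | empty => simpa using fil_zero n
  | insert a s ha ih =>
    rw [Finset.prod_insert ha]
    exact one_fil_mul h hn (hf _ (by simp)) (ih fun i hi => hf i (by simp [hi]))

theorem binom (hp : p.Prime) (h : IsNormalizedVal p K v) {j : ℤ} (hj : 0 ≤ j) {y : K}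
    (hy : Fil v j y) :
    Fil v (v (p : K) + 2 * j) ((1 + y) ^ p - 1 - p * y - y ^ p) := by
  obtain ⟨q, rfl⟩ : ∃ q, p = q + 2 := ⟨p - 2, by have := hp.two_le; omega⟩
  have e1 : (1 + y) ^ (q + 2) - 1 - (q + 2 : ℕ) * y - y ^ (q + 2)
      = ∑ k ∈ Finset.range q, y ^ (k + 2) * ((q + 2).choose (k + 2) : K) := by
    rw [add_comm 1 y, add_pow, Finset.sum_range_succ, Finset.sum_range_succ',
      Finset.sum_range_succ']
    simp
    ring
  rw [e1]
  apply fil_sum h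
  intro k hk
  have hk' := Finset.mem_range.1 hk
  obtain ⟨c, hc⟩ := hp.dvd_choose_self (k := k + 2) (by omega) (by omega)
  rw [hc, Nat.cast_mul, mul_comm (y ^ _)]
  have h1 := fil_mul h (fil_mul h (fil_self (v := v) ((q + 2 : ℕ) : K)) (fil_natCast h c))
    (fil_pow h hy (k + 2))
  refine fil_mono ?_ h1
  push_cast
  nlinarith

end basic

section padic
variable {p : ℕ} [hp : Fact p.Prime] {K : Type*} [Field K] [Algebra ℚ_[p] K] {v : K → ℤ}

theorem v_one_unit (h : IsNormalizedVal p K v) (c : ℤ_[p]) (hc : ‖c - 1‖ < 1) :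
    v (algebraMap ℚ_[p] K c) = 0 := by
  set m := (v (algebraMap ℚ_[p] K c)).natAbs with hm
  set n := p * (m + 1) + 1 with hn
  have hn1 : ‖(n : ℤ_[p])‖ = 1 := by
    have : ¬ (p ∣ n) := by
      rw [hn]; intro hd
      have := (Nat.dvd_add_right (Dvd.intro _ rfl)).1 hd
      exact hp.out.one_lt.ne' (Nat.dvd_one.1 this)
    rw [PadicInt.norm_natCast_eq_one_iff]
    exact ((Nat.Prime.coprime_iff_not_dvd hp.out).2 this)
  obtain ⟨z, hz, -⟩ := hensels_lemma (p := p) (R := ℤ_[p]) (F := (Polynomial.X ^ n - Polynomial.C c)) (a := 1)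
    (by
      have : ‖(Polynomial.X ^ n - Polynomial.C c : Polynomial ℤ_[p]).derivative.aeval (1 : ℤ_[p])‖ = 1 := by
        rw [Polynomial.derivative_sub, Polynomial.derivative_X_pow]
        simp [hn1, -Polynomial.map_natCast]
      rw [this]
      simp
      rw [← norm_neg]; simpa using hc)
  have hz' : z ^ n = c := by
    simpa [sub_eq_zero] using hz
  have hc1 : ‖c‖ = 1 := by
    have := PadicInt.norm_add_eq_max_of_ne (p := p) (q := c - 1) (r := 1) (by simpa using hc.ne)
    simpa [max_eq_right hc.le] using this
  have hz0 : z ≠ 0 := by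
    rintro rfl
    rw [zero_pow (by omega)] at hz'
    rw [← hz'] at hc1; simp at hc1
  have h2 : algebraMap ℚ_[p] K z ≠ 0 := by
    simpa using hz0
  have h1 := v_pow h h2 n
  rw [← map_pow, ← PadicInt.coe_pow, hz'] at h1
  by_contra h3
  have h4 : (n : ℤ) ∣ v (algebraMap ℚ_[p] K c) := ⟨_, h1⟩
  have h5 := Int.le_of_dvd (by positivity) ((dvd_abs _ _).2 h4)
  have h6 : p * (m+1) ≥ m + 1 := Nat.le_mul_of_pos_left _ hp.out.pos
  have h7 : |v (algebraMap ℚ_[p] K c)| = (m : ℤ) := by rw [hm, Int.abs_eq_natAbs]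
  rw [h7] at h5
  have h8 : n ≤ m := by exact_mod_cast h5
  omega

theorem v_unit (h : IsNormalizedVal p K v) (c : ℤ_[p]) (hc : ‖c‖ = 1) :
    v (algebraMap ℚ_[p] K c) = 0 := by
  have hc0 : algebraMap ℚ_[p] K c ≠ 0 := by
    have : c ≠ 0 := by rintro rfl; simp at hc
    simpa using this
  have h1 := v_one_unit h (c ^ (p - 1)) (by
    rw [← PadicInt.mem_nonunits, ← IsLocalRing.mem_maximalIdeal, ← PadicInt.ker_toZMod, RingHom.mem_ker]
    have : PadicInt.toZMod c ≠ 0 := by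
      rw [Ne, ← RingHom.mem_ker, PadicInt.ker_toZMod, IsLocalRing.mem_maximalIdeal, PadicInt.mem_nonunits]
      simp [hc]
    simp [ZMod.pow_card_sub_one_eq_one this])
  rw [PadicInt.coe_pow, map_pow, v_pow h hc0] at h1
  have := hp.out.two_le
  rcases mul_eq_zero.1 h1 with h2 | h2
  · omega
  · exact h2

theorem v_padic (h : IsNormalizedVal p K v) (x : ℚ_[p]) (hx : x ≠ 0) :
    v (algebraMap ℚ_[p] K x) = v (p : K) * x.valuation := by
  have hp0 : (p : ℚ_[p]) ≠ 0 := by exact_mod_cast hp.out.ne_zero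
  have h1 : ‖x * (p : ℚ_[p]) ^ (- x.valuation)‖ = 1 := by
    have : (p : ℝ) ≠ 0 := by exact_mod_cast hp.out.ne_zero
    rw [norm_mul, Padic.norm_eq_zpow_neg_valuation hx, norm_zpow, Padic.norm_p, inv_zpow]
    exact mul_inv_cancel₀ (zpow_ne_zero _ this)
  have h2 := v_unit h ⟨_, h1.le⟩ h1
  simp only [map_mul, map_zpow₀, map_natCast] at h2
  have hpK : (p : K) ≠ 0 := by
    have := (map_ne_zero (algebraMap ℚ_[p] K)).2 hp0
    simpa using this
  rw [v_mul h (by simpa using hx) (zpow_ne_zero _ hpK), v_zpow h hpK] at h2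
  linarith

end padic

section top
variable {p : ℕ} [hp : Fact p.Prime] {K : Type*} [Field K] [Algebra ℚ_[p] K] {v : K → ℤ}

open Classical in
/-- the absolute value attached to a valuation -/
noncomputable def absv (h : IsNormalizedVal p K v) (r : ℝ) (hr0 : 0 < r) (hr1 : r < 1) :
    AbsoluteValue K ℝ where
  toFun x := if x = 0 then 0 else r ^ (v x)
  map_mul' x y := by
    by_cases hx : x = 0
    · simp [hx]
    by_cases hy : y = 0
    · simp [hy]
    simp [hx, hy, v_mul h hx hy, zpow_add₀ hr0.ne']
  nonneg' x := by
    change 0 ≤ (if x = 0 then (0:ℝ) else r ^ (v x)); split_ifs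
    · exact le_rfl
    · positivity
  eq_zero' x := by
    have := zpow_ne_zero (v x) hr0.ne'
    by_cases hx : x = 0 <;> simp [hx, this]
  add_le' x y := by
    by_cases hx : x = 0
    · simp [hx]
    by_cases hy : y = 0
    · simp [hy]
    have h1 : 0 < r ^ v x := by positivity
    have h2 : 0 < r ^ v y := by positivity
    by_cases hxy : x + y = 0
    · simp [hx, hy, hxy]; linarith
    simp only [hx, hy, hxy, if_false]
    rcases min_le_iff.1 (h.2.1 x y hx hy hxy) with h3 | h3
    · have := zpow_le_zpow_right_of_le_one₀ hr0 hr1.le h3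
      linarith
    · have := zpow_le_zpow_right_of_le_one₀ hr0 hr1.le h3
      linarith

theorem absv_le_iff (h : IsNormalizedVal p K v) (r : ℝ) (hr0 : 0 < r) (hr1 : r < 1) (n : ℤ) (x : K) :
    absv h r hr0 hr1 x ≤ r ^ n ↔ Fil v n x := by
  have h1 : 0 < r ^ n := by positivity
  classical
  have h2 : absv h r hr0 hr1 x = (if x = 0 then 0 else r ^ (v x)) := by
    simp only [absv, AbsoluteValue.coe_mk, MulHom.coe_mk]
  rw [h2]
  by_cases hx : x = 0
  · simp [hx, h1.le, fil_zero]
  · simp [hx, Fil, zpow_le_zpow_iff_right_of_lt_one₀ hr0 hr1]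

theorem top_facts [FiniteDimensional ℚ_[p] K] (h : IsNormalizedVal p K v) :
    (∃ N : ℤ, ∀ u : K, Fil v N (u - 1) → ∃ y : K, y ^ p = u) ∧
    (∃ S : Finset K, ∀ x : K, Fil v 0 x → ∃ s ∈ S, Fil v 1 (x - s)) := by
  have he : 0 < v (p : K) := h.2.2.2
  have hpR : (1 : ℝ) < p := by exact_mod_cast hp.out.one_lt
  obtain ⟨r, hr0, hr1, hre⟩ : ∃ r : ℝ, 0 < r ∧ r < 1 ∧ r ^ (v (p : K)) = (p : ℝ)⁻¹ := by
    refine ⟨(p : ℝ) ^ (-(1 / (v (p : K) : ℝ))), by positivity, ?_, ?_⟩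
    · apply Real.rpow_lt_one_of_one_lt_of_neg hpR
      have : (0 : ℝ) < v (p : K) := by exact_mod_cast he
      simp [this]
    · rw [← Real.rpow_intCast, ← Real.rpow_mul (by positivity)]
      have : (v (p : K) : ℝ) ≠ 0 := by exact_mod_cast he.ne'
      rw [neg_mul, one_div_mul_cancel this, Real.rpow_neg_one]
  let nf : NormedField K := (absv h r hr0 hr1).toNormedField
  have hnorm : ∀ x : K, ‖x‖ = absv h r hr0 hr1 x := fun x => rfl
  have hle : ∀ (n : ℤ) (x : K), ‖x‖ ≤ r ^ n ↔ Fil v n x := fun n x => by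
    rw [hnorm, absv_le_iff]
  have hmap : ∀ x : ℚ_[p], ‖algebraMap ℚ_[p] K x‖ = ‖x‖ := by
    intro x
    by_cases hx : x = 0
    · simp [hx]
    rw [hnorm]
    change (@ite _ _ (_) 0 (r ^ (v _))) = _
    rw [if_neg (by simpa using hx), v_padic h x hx, zpow_mul, hre,
      Padic.norm_eq_zpow_neg_valuation hx, inv_zpow, zpow_neg]
  let na : NormedAlgebra ℚ_[p] K :=
    { (inferInstance : Algebra ℚ_[p] K) with
      norm_smul_le := fun a x => by rw [Algebra.smul_def, norm_mul, hmap] }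
  have hp0 : (p : K) ≠ 0 := by
    have hp0 : (p : ℚ_[p]) ≠ 0 := by exact_mod_cast hp.out.ne_zero
    have := (map_ne_zero (algebraMap ℚ_[p] K)).2 hp0
    simpa using this
  let nnf : NontriviallyNormedField K :=
    { nf with
      non_trivial := by
        refine ⟨(p : K)⁻¹, ?_⟩
        have := hmap (p : ℚ_[p])
        rw [map_natCast, Padic.norm_p] at this
        change 1 < nf.norm _
        rw [norm_inv, this, inv_inv]; exact hpR }
  have : CompleteSpace K := FiniteDimensional.complete ℚ_[p] K
  have : ProperSpace K := FiniteDimensional.proper ℚ_[p] K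
  constructor
  · have h1 : HasStrictDerivAt (fun x : K => x ^ p) ((p : K) * 1 ^ (p - 1)) 1 :=
      hasStrictDerivAt_pow p 1
    have h2 := h1.map_nhds_eq (by simpa using hp0)
    have h3 : Set.range (fun x : K => x ^ p) ∈ nhds (1 : K) := by
      have : Set.range (fun x : K => x ^ p) ∈ Filter.map (fun x : K => x ^ p) (nhds 1) :=
        Filter.range_mem_map
      rw [h2] at this
      simpa using this
    obtain ⟨ε, hε, hb⟩ := Metric.mem_nhds_iff.1 h3
    obtain ⟨n, hn⟩ := exists_pow_lt_of_lt_one hε hr1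
    refine ⟨n, fun u hu => ?_⟩
    have := (hle n (u - 1)).2 hu
    have h4 : u ∈ Metric.ball (1 : K) ε := by
      rw [Metric.mem_ball, dist_eq_norm]
      rw [zpow_natCast] at this
      exact this.trans_lt hn
    exact hb h4
  · have hc : IsCompact (Metric.closedBall (0 : K) 1) := isCompact_closedBall 0 1
    obtain ⟨t, -, hf, ht⟩ := hc.totallyBounded.exists_subset (Metric.dist_mem_uniformity hr0)
    refine ⟨hf.toFinset, fun x hx => ?_⟩
    have hx' : x ∈ Metric.closedBall (0 : K) 1 := by
      have := (hle 0 x).2 hx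
      simpa using this
    have := ht hx'
    simp only [Set.mem_iUnion] at this
    obtain ⟨s, hs, hd⟩ := this
    refine ⟨s, by simpa using hs, ?_⟩
    rw [← hle, zpow_one, ← dist_eq_norm]
    exact le_of_lt hd

theorem p_ne_zero (K : Type*) [Field K] [Algebra ℚ_[p] K] : (p : K) ≠ 0 := by
  have hp0 : (p : ℚ_[p]) ≠ 0 := by exact_mod_cast hp.out.ne_zero
  have := (map_ne_zero (algebraMap ℚ_[p] K)).2 hp0
  simpa using this

/-- one-units of high level are `p`-th powers -/
theorem pth_power [FiniteDimensional ℚ_[p] K] (h : IsNormalizedVal p K v) {s : ℤ}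
    (hs : ((p : ℤ) - 1) * s = v (p : K)) (u : K) (hu : Fil v (p * s + 1) (u - 1)) :
    ∃ y : K, y ^ p = u := by
  obtain ⟨⟨N, hN⟩, -⟩ := top_facts h
  have he : 0 < v (p : K) := h.2.2.2
  have hp0 := p_ne_zero (p := p) K
  have hp2 : (2 : ℤ) ≤ p := by exact_mod_cast hp.out.two_le
  have hs0 : 0 < s := by nlinarith
  have key : ∀ (k : ℕ) (u : K), Fil v (N - k) (u - 1) → Fil v (p * s + 1) (u - 1) →
      ∃ y : K, y ^ p = u := by
    intro k
    induction k with
    | zero => intro u hu _; exact hN u (by simpa using hu)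
    | succ k ih =>
      intro u hu1 hu2
      by_cases hlt : N - k ≤ p * s + 1
      · exact ih u (fil_mono hlt hu2) hu2
      obtain ⟨m, hm⟩ : ∃ m, m = N - (k + 1 : ℕ) := ⟨_, rfl⟩
      rw [← hm] at hu1
      have hm1 : p * s + 1 ≤ m := by push_cast at hm; omega
      set w := u - 1 with hw
      have hes : v (p : K) = p * s - s := by rw [← hs]; ring
      have hwp : Fil v (m - v (p : K)) (w / p) := by
        have h1 : Fil v (- v (p : K)) ((p : K)⁻¹) := Or.inr (v_inv h hp0).ge
        rw [div_eq_mul_inv]; exact fil_mul h hu1 h1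
      have hb := binom hp.out h (by omega) hwp
      have hpw := fil_pow h hwp p
      have hd : Fil v (m + 1) ((1 + w / p) ^ p - u) := by
        have : (1 + w / p) ^ p - u = ((1 + w / p) ^ p - 1 - p * (w / p) - (w / p) ^ p)
            + (w / p) ^ p := by rw [mul_div_cancel₀ _ hp0, hw]; ring
        rw [this]
        refine fil_add h (fil_mono (by omega) hb) (fil_mono ?_ hpw)
        nlinarith
      obtain ⟨hu0, hvu⟩ := unit_of_fil h (by nlinarith) hu2
      have hone : Fil v (m + 1) ((1 + w / p) ^ p / u - 1) := by
        have : (1 + w / p) ^ p / u - 1 = ((1 + w / p) ^ p - u) * u⁻¹ := by field_simp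
        rw [this]
        have h2 : Fil v 0 u⁻¹ := Or.inr (by rw [v_inv h hu0, hvu]; simp)
        simpa using fil_mul h hd h2
      have hone' := one_fil_inv h (by nlinarith) hone
      obtain ⟨y, hy⟩ := ih _ (fil_mono (by push_cast at hm; omega) hone')
        (fil_mono (by omega) hone')
      obtain ⟨h30, -⟩ := unit_of_fil h (by nlinarith : 0 < m + 1) hone
      have h31 : (1 + w / p) ^ p ≠ 0 := fun h0 => h30 (by simp [h0])
      refine ⟨y * (1 + w / p), ?_⟩
      rw [mul_pow, hy, inv_div, div_mul_cancel₀ _ h31]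
  exact key (N - (p * s + 1)).toNat u (fil_mono (by omega) hu) hu

theorem exists_nonpower [FiniteDimensional ℚ_[p] K] (h : IsNormalizedVal p K v) {s : ℤ}
    (hs : ((p : ℤ) - 1) * s = v (p : K)) (lam : K) (hl0 : lam ≠ 0) (hl : v lam = s)
    (hz : (1 + lam) ^ p = 1) :
    ∃ c : K, Fil v 0 c ∧ ∀ b : K, Fil v s b → ¬ Fil v (p * s + 1) ((1 + b) ^ p - (1 + c * lam ^ p)) := by
  obtain ⟨-, S, hS⟩ := top_facts h
  have he : 0 < v (p : K) := h.2.2.2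
  have hp0 := p_ne_zero (p := p) K
  have hp2 : (2 : ℤ) ≤ p := by exact_mod_cast hp.out.two_le
  have hs0 : 0 < s := by nlinarith
  let R : Subring K :=
    { carrier := {x | Fil v 0 x}
      mul_mem' := fun hx hy => by simpa using fil_mul h hx hy
      one_mem' := fil_one h
      add_mem' := fun hx hy => fil_add h hx hy
      zero_mem' := fil_zero 0
      neg_mem' := fun hx => fil_neg h hx }
  let I : Ideal R :=
    { carrier := {x | Fil v 1 (x : K)}
      add_mem' := fun hx hy => fil_add h hx hy
      zero_mem' := fil_zero 1
      smul_mem' := fun c x hx => by simpa using fil_mul h c.2 hx }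
  have hI : ∀ x y : R, Ideal.Quotient.mk I x = Ideal.Quotient.mk I y ↔ Fil v 1 ((x : K) - y) := by
    intro x y; rw [Ideal.Quotient.eq]; rfl
  have : Finite (R ⧸ I) := by
    classical
    choose f hf1 hf2 using hS
    have hinj : Function.Injective (fun q : R ⧸ I =>
        (⟨f (Quotient.out q : R) (Quotient.out q : R).2, hf1 _ _⟩ : S)) := by
      intro q q' hqq
      have e1 : f (Quotient.out q : R) (Quotient.out q : R).2
        = f (Quotient.out q' : R) (Quotient.out q' : R).2 := congrArg Subtype.val hqq
      have h1 := hf2 (Quotient.out q : R) (Quotient.out q : R).2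
      have h2 := hf2 (Quotient.out q' : R) (Quotient.out q' : R).2
      rw [e1] at h1
      have h3 := fil_sub h h1 h2
      rw [sub_sub_sub_cancel_right, ← hI] at h3
      simpa using h3
    exact Finite.of_injective _ hinj
  have heta : Fil v 0 ((p : K) * lam / lam ^ p) := by
    right
    rw [v_div h (mul_ne_zero hp0 hl0) (pow_ne_zero _ hl0), v_mul h hp0 hl0, v_pow h hl0, hl, ← hs]
    ring_nf; exact le_rfl
  have hlp : v (lam ^ p) = p * s := by rw [v_pow h hl0, hl]
  have hlp0 : lam ^ p ≠ 0 := pow_ne_zero _ hl0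
  let eta : R := ⟨_, heta⟩
  -- the basic expansion
  have hexp : ∀ b : R, Fil v (p * s + 1) ((1 + b * lam) ^ p - (1 + ((b : K) ^ p + eta * b) * lam ^ p)) := by
    intro b
    have hb := binom hp.out h (y := (b : K) * lam) hs0.le (by
      have := fil_mul h b.2 (fil_self (v := v) lam)
      rwa [zero_add, hl] at this)
    have e : (1 + b * lam) ^ p - (1 + ((b : K) ^ p + eta * b) * lam ^ p)
      = (1 + b * lam) ^ p - 1 - p * (b * lam) - (b * lam) ^ p := by
      change _ - (1 + ((b : K) ^ p + ((p : K) * lam / lam ^ p) * b) * lam ^ p) = _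
      field_simp
      ring
    rw [e]
    exact fil_mono (by nlinarith) hb
  have hdiv : ∀ x : K, Fil v (p * s + 1) (x * lam ^ p) → Fil v 1 x := by
    rintro x (hx | hx)
    · left; exact (mul_eq_zero.1 hx).resolve_right hlp0
    · by_cases hx0 : x = 0
      · exact Or.inl hx0
      · right; rw [v_mul h hx0 hlp0, hlp] at hx; omega
  let g : R ⧸ I → R ⧸ I := fun y => y ^ p + Ideal.Quotient.mk I eta * y
  have hg0 : g 0 = 0 := by simp [g, hp.out.ne_zero]
  have hg1 : g 1 = 0 := by
    have h1 := hexp 1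
    simp only [Subring.coe_one, one_mul, hz, one_pow, mul_one] at h1
    have h2 : Fil v 1 (1 + (eta : K)) := by
      apply hdiv
      have := fil_neg h h1
      simpa using this
    have h3 := (hI (1 + eta) 0).2 (by simpa using h2)
    simpa [g] using h3
  have hne : (0 : R ⧸ I) ≠ 1 := by
    intro h01
    have := (hI 0 1).1 (by simpa using h01)
    have h2 := not_fil (v := v) (n := 1) (x := (-1 : K)) (by simp) (by rw [v_neg_one h]; simp)
    exact h2 (by simpa using this)
  have hns : ¬ Function.Surjective g := by
    rw [← Finite.injective_iff_surjective]
    intro hi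
    exact hne (hi (hg0.trans hg1.symm))
  simp only [Function.Surjective, not_forall, not_exists] at hns
  obtain ⟨q, hq⟩ := hns
  obtain ⟨c, rfl⟩ := Ideal.Quotient.mk_surjective q
  refine ⟨c, c.2, fun b hb hbad => ?_⟩
  have hb0 : Fil v 0 (b / lam) := by
    have := fil_mul h hb (Or.inr (v_inv h hl0).ge : Fil v (- v lam) lam⁻¹)
    rwa [hl, add_neg_cancel, ← div_eq_mul_inv] at this
  apply hq (Ideal.Quotient.mk I ⟨_, hb0⟩)
  have h1 := hexp ⟨_, hb0⟩
  simp only [div_mul_cancel₀ _ hl0] at h1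
  have h2 := fil_sub h hbad h1
  rw [sub_sub_sub_cancel_left, add_sub_add_left_eq_sub, ← sub_mul] at h2
  have h3 := hdiv _ h2
  have h4 := (hI (⟨_, hb0⟩ ^ p + eta * ⟨_, hb0⟩) c).2 (by simpa using h3)
  simpa [g] using h4

theorem lam_val (h : IsNormalizedVal p K v) {ζ : K} (hζ : IsPrimitiveRoot ζ p) :
    ζ - 1 ≠ 0 ∧ ((p : ℤ) - 1) * v (ζ - 1) = v (p : K) ∧ 0 < v (ζ - 1) := by
  have he : 0 < v (p : K) := h.2.2.2
  have hp0 := p_ne_zero (p := p) K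
  have hp2 : (2 : ℤ) ≤ p := by exact_mod_cast hp.out.two_le
  have hl0 : ζ - 1 ≠ 0 := sub_ne_zero.2 (hζ.ne_one hp.out.one_lt)
  have hζ0 : ζ ≠ 0 := hζ.ne_zero hp.out.ne_zero
  have hvz : v ζ = 0 := by
    have := v_pow h hζ0 p
    rw [hζ.pow_eq_one, v_one h] at this
    rcases mul_eq_zero.1 this.symm with h1 | h1
    · omega
    · exact h1
  have hl1 : Fil v 0 (ζ - 1) := fil_sub h (Or.inr hvz.ge) (fil_one h)
  set lam := ζ - 1 with hlam
  set s := v lam with hs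
  have hs0 : 0 ≤ s := hl1.resolve_left hl0
  have hb := binom hp.out h hs0 (fil_self (v := v) lam)
  have e : (1 + lam) ^ p - 1 - p * lam - lam ^ p = -(p * lam + lam ^ p) := by
    rw [hlam, add_sub_cancel, hζ.pow_eq_one]; ring
  rw [e] at hb
  have hb := fil_neg h hb
  rw [neg_neg] at hb
  have hvp := v_pow h hl0 p
  have hvm := v_mul h hp0 hl0
  have hpos : 0 < s := by
    by_contra hns
    have hs1 : s = 0 := by omega
    have h1 : Fil v (v (p : K)) (lam ^ p) := by
      have h3 := fil_sub h (fil_mono (by omega : v (p : K) ≤ _) hb) (Or.inr (by rw [hvm]; omega) : Fil v (v (p : K)) (p * lam))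
      rwa [add_sub_cancel_left] at h3
    have h2 := h1.resolve_left (pow_ne_zero _ hl0)
    rw [hvp, ← hs, hs1] at h2
    simp at h2; omega
  refine ⟨hl0, ?_, hpos⟩
  rcases lt_trichotomy (v (p * lam)) (v (lam ^ p)) with h1 | h1 | h1
  · exfalso
    obtain ⟨h2, h3⟩ := v_add_eq h (mul_ne_zero hp0 hl0) (y := lam ^ p) (Or.inr (by omega))
    have := hb.resolve_left h2
    omega
  · linarith
  · exfalso
    obtain ⟨h2, h3⟩ := v_add_eq h (pow_ne_zero p hl0) (y := p * lam) (Or.inr (by omega))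
    rw [add_comm] at h2 h3
    have := hb.resolve_left h2
    omega

end top

section field
variable {p : ℕ} [hp : Fact p.Prime] {K L : Type*} [Field K] [Field L] [Algebra K L]
  {vK : K → ℤ} {vL : L → ℤ}

open Polynomial in
theorem irr (h : IsNormalizedVal p K vK) {κ : K} (h0 : κ ≠ 0) (hκ : ¬ (p : ℤ) ∣ vK κ) :
    Irreducible (X ^ p - C κ) := by
  apply X_pow_sub_C_irreducible_of_prime hp.out
  rintro b rfl
  have hb : b ≠ 0 := by rintro rfl; simp [hp.out.ne_zero] at h0
  exact hκ ⟨_, v_pow h hb p⟩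

open Polynomial in
theorem minpoly_eq (h : IsNormalizedVal p K vK) {κ : K} (h0 : κ ≠ 0) (hκ : ¬ (p : ℤ) ∣ vK κ)
    {θ : L} (hθ : θ ^ p = algebraMap K L κ) : minpoly K θ = X ^ p - C κ :=
  (minpoly.eq_of_irreducible_of_monic (irr h h0 hκ) (by simp [hθ])
    (monic_X_pow_sub_C _ hp.out.ne_zero)).symm

theorem isInt {κ : K} {θ : L} (hθ : θ ^ p = algebraMap K L κ) : IsIntegral K θ :=
  IsIntegral.of_pow hp.out.pos (hθ ▸ isIntegral_algebraMap)

open Polynomial in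
theorem finrank_eq (h : IsNormalizedVal p K vK) {κ : K} (h0 : κ ≠ 0) (hκ : ¬ (p : ℤ) ∣ vK κ)
    {θ : L} (hθ : θ ^ p = algebraMap K L κ) (htop : IntermediateField.adjoin K {θ} = ⊤) :
    Module.finrank K L = p := by
  rw [← IntermediateField.finrank_top', ← htop, IntermediateField.adjoin.finrank (isInt hθ),
    minpoly_eq h h0 hκ hθ, natDegree_X_pow_sub_C]

open Polynomial in
theorem adj_top (h : IsNormalizedVal p K vK) (hfin : Module.finrank K L = p) {κ : K} (h0 : κ ≠ 0)
    (hκ : ¬ (p : ℤ) ∣ vK κ)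
    {θ : L} (hθ : θ ^ p = algebraMap K L κ) : IntermediateField.adjoin K {θ} = ⊤ := by
  have : FiniteDimensional K L := FiniteDimensional.of_finrank_pos (by rw [hfin]; exact hp.out.pos)
  rw [Field.primitive_element_iff_minpoly_natDegree_eq, minpoly_eq h h0 hκ hθ,
    natDegree_X_pow_sub_C, hfin]

open Polynomial in
theorem expand {κ : K} {θ : L} (hθ : θ ^ p = algebraMap K L κ)
    (htop : IntermediateField.adjoin K {θ} = ⊤) (x : L) :
    ∃ a : ℕ → K, x = ∑ i ∈ Finset.range p, algebraMap K L (a i) * θ ^ i := by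
  have hx : x ∈ Algebra.adjoin K {θ} := by
    rw [← IntermediateField.adjoin_simple_toSubalgebra_of_isAlgebraic (isInt hθ).isAlgebraic, htop]
    trivial
  rw [Algebra.adjoin_singleton_eq_range_aeval] at hx
  obtain ⟨f, rfl⟩ := hx
  have hm : (X ^ p - C κ).Monic := monic_X_pow_sub_C _ hp.out.ne_zero
  refine ⟨(f %ₘ (X ^ p - C κ)).coeff, ?_⟩
  have h1 : aeval θ f = aeval θ (f %ₘ (X ^ p - C κ)) := by
    conv_lhs => rw [← modByMonic_add_div f (X ^ p - C κ)]
    simp [hθ]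
  change aeval θ f = _
  rw [h1, aeval_eq_sum_range' (n := p)]
  · simp [Algebra.smul_def]
  · have h2 := natDegree_modByMonic_lt f hm (by
      intro h1
      have := congrArg natDegree h1
      rw [natDegree_X_pow_sub_C, natDegree_one] at this
      exact hp.out.ne_zero this)
    rwa [natDegree_X_pow_sub_C] at h2

theorem norm_one_sub (h : IsNormalizedVal p K vK) (hfin : Module.finrank K L = p) {κ : K}
    (h0 : κ ≠ 0) (hκ : ¬ (p : ℤ) ∣ vK κ)
    {θ : L} (hθ : θ ^ p = algebraMap K L κ) : Algebra.norm K (1 - θ) = 1 - κ := by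
  have : FiniteDimensional K L := FiniteDimensional.of_finrank_pos (by rw [hfin]; exact hp.out.pos)
  have hmin : minpoly K (θ - 1) = (Polynomial.X ^ p - Polynomial.C κ).comp (Polynomial.X + Polynomial.C 1) := by
    have := minpoly.sub_algebraMap (A := K) θ 1
    rwa [map_one, minpoly_eq h h0 hκ hθ] at this
  have hnd : (minpoly K (θ - 1)).natDegree = p := by
    rw [hmin, Polynomial.natDegree_comp, Polynomial.natDegree_X_pow_sub_C,
      Polynomial.natDegree_X_add_C, mul_one]
  have htop : IntermediateField.adjoin K {θ - 1} = ⊤ := by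
    rw [Field.primitive_element_iff_minpoly_natDegree_eq, hnd, hfin]
  have hint : IsIntegral K (θ - 1) := (isInt hθ).sub isIntegral_one
  have htop' : Algebra.adjoin K {θ - 1} = ⊤ := by
    rw [← IntermediateField.adjoin_simple_toSubalgebra_of_isAlgebraic hint.isAlgebraic, htop,
      IntermediateField.top_toSubalgebra]
  have h1 := Algebra.PowerBasis.norm_gen_eq_coeff_zero_minpoly (PowerBasis.ofAdjoinEqTop' hint htop')
  rw [PowerBasis.ofAdjoinEqTop'_gen, PowerBasis.ofAdjoinEqTop'_dim, hnd, hmin] at h1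
  have h2 : (1 - θ) = algebraMap K L (-1) * (θ - 1) := by simp
  rw [h2, map_mul, h1, Algebra.norm_algebraMap, hfin, ← mul_assoc, ← mul_pow]
  simp [Polynomial.coeff_zero_eq_eval_zero]

/-- The minimum principle for sums of terms with distinct valuations. -/
theorem sum_min (h : IsNormalizedVal p L vL) (s : Finset ℕ) (f : ℕ → L)
    (hd : ∀ i ∈ s, ∀ j ∈ s, f i ≠ 0 → f j ≠ 0 → i ≠ j → vL (f i) ≠ vL (f j))
    (hne : ∃ i ∈ s, f i ≠ 0) :
    ∃ i ∈ s, f i ≠ 0 ∧ ∑ j ∈ s, f j ≠ 0 ∧ vL (∑ j ∈ s, f j) = vL (f i) ∧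
      ∀ j ∈ s, Fil vL (vL (f i)) (f j) := by
  classical
  obtain ⟨i0, hi0, hf0⟩ := hne
  obtain ⟨i, hi, hmin⟩ := Finset.exists_min_image (s.filter fun i => f i ≠ 0) (fun i => vL (f i))
    ⟨i0, by simp [hi0, hf0]⟩
  rw [Finset.mem_filter] at hi
  have hrest : Fil vL (vL (f i) + 1) (∑ j ∈ s.erase i, f j) := by
    apply fil_sum h
    intro j hj
    rw [Finset.mem_erase] at hj
    by_cases hj0 : f j = 0
    · exact Or.inl hj0
    · right
      have h1 := hmin j (by simp [hj.2, hj0])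
      have h2 := hd i hi.1 j hj.2 hi.2 hj0 hj.1.symm
      omega
  obtain ⟨h1, h2⟩ := v_add_eq h hi.2 hrest
  rw [Finset.add_sum_erase _ _ hi.1] at h1 h2
  refine ⟨i, hi.1, hi.2, h1, h2, fun j hj => ?_⟩
  by_cases hj0 : f j = 0
  · exact Or.inl hj0
  · exact Or.inr (hmin j (by simp [hj, hj0]))

theorem theta_val (h : IsNormalizedVal p L vL) {e : ℤ}
    (hext : ∀ x : K, x ≠ 0 → vL (algebraMap K L x) = e * vK x) {κ : K} (h0 : κ ≠ 0)
    {θ : L} (hθ : θ ^ p = algebraMap K L κ) : θ ≠ 0 ∧ p * vL θ = e * vK κ := by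
  have hθ0 : θ ≠ 0 := by
    rintro rfl
    rw [zero_pow hp.out.ne_zero] at hθ
    exact h0 (by simpa using hθ.symm)
  refine ⟨hθ0, ?_⟩
  rw [← v_pow h hθ0, hθ, hext _ h0]

theorem ram_eq (hL : IsNormalizedVal p L vL) {e : ℤ} (he : 0 < e)
    (hext : ∀ x : K, x ≠ 0 → vL (algebraMap K L x) = e * vK x) {κ : K} (h0 : κ ≠ 0)
    (hκ : ¬ (p : ℤ) ∣ vK κ) {θ : L} (hθ : θ ^ p = algebraMap K L κ)
    (htop : IntermediateField.adjoin K {θ} = ⊤) : e = p := by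
  obtain ⟨hθ0, h1⟩ := theta_val hL hext h0 hθ
  have hpp : Prime (p : ℤ) := Nat.prime_iff_prime_int.1 hp.out
  have hp0 : (p : ℤ) ≠ 0 := hpp.ne_zero
  obtain ⟨m, rfl⟩ : (p : ℤ) ∣ e := (hpp.dvd_or_dvd ⟨_, h1.symm⟩).resolve_right hκ
  have h2 : vL θ = m * vK κ := by
    apply mul_left_cancel₀ hp0; rw [h1]; ring
  have hm : 0 < m := by
    have : (0 : ℤ) < p := by exact_mod_cast hp.out.pos
    exact (mul_pos_iff_of_pos_left this).1 he
  obtain ⟨π, hπ0, hπ⟩ := hL.2.2.1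
  obtain ⟨a, ha⟩ := expand hθ htop π
  have hv : ∀ i, algebraMap K L (a i) * θ ^ i ≠ 0 →
      vL (algebraMap K L (a i) * θ ^ i) = m * (p * vK (a i) + i * vK κ) := by
    intro i hi
    have hai : a i ≠ 0 := by intro h; simp [h] at hi
    rw [v_mul hL (by simpa using hai) (pow_ne_zero _ hθ0), v_pow hL hθ0, hext _ hai, h2]; ring
  obtain ⟨i, hi, hfi, -, hvi, -⟩ := sum_min hL (Finset.range p)
    (fun i => algebraMap K L (a i) * θ ^ i) (by
      intro i hi j hj hi0 hj0 hij heq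
      rw [hv i hi0, hv j hj0] at heq
      have h3 := mul_left_cancel₀ hm.ne' heq
      have h4 : (p : ℤ) ∣ ((i : ℤ) - j) * vK κ := ⟨vK (a j) - vK (a i), by linarith⟩
      obtain ⟨c, hc⟩ := (hpp.dvd_or_dvd h4).resolve_right hκ
      rw [Finset.mem_range] at hi hj
      have hc0 : c = 0 := by
        by_contra hc0
        rcases lt_or_gt_of_ne hc0 with h5 | h5
        · nlinarith
        · nlinarith
      rw [hc0] at hc
      apply hij; omega) (by
      by_contra hcon
      push Not at hcon
      rw [Finset.sum_eq_zero hcon] at ha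
      exact hπ0 ha)
  rw [← ha, hπ, hv i hfi] at hvi
  have : m = 1 := by
    have h5 : m ∣ 1 := ⟨_, hvi⟩
    exact Int.eq_one_of_dvd_one hm.le h5
  rw [this, mul_one]

end field

/-- normalized situation -/
structure Core (p : ℕ) (K L : Type*) [Field K] [Field L] [Algebra K L]
    (vK : K → ℤ) (vL : L → ℤ) (κ : K) (θ : L) (s : ℕ) : Prop where
  hK : IsNormalizedVal p K vK
  hL : IsNormalizedVal p L vL
  hext : ∀ x : K, x ≠ 0 → vL (algebraMap K L x) = p * vK x
  hκ0 : κ ≠ 0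
  hκ : vK κ = 1
  hθ : θ ^ p = algebraMap K L κ
  hfin : Module.finrank K L = p
  hgal : IsGalois K L
  hζ : ∃ ζ : K, IsPrimitiveRoot ζ p
  hs : ((p : ℤ) - 1) * s = vK (p : K)

namespace Core
variable {p : ℕ} [hp : Fact p.Prime] {K L : Type*} [Field K] [Field L] [Algebra K L]
  {vK : K → ℤ} {vL : L → ℤ} {κ : K} {θ : L} {s : ℕ}

theorem not_dvd_one : ¬ ((p : ℤ) ∣ 1) := by
  intro h
  have := Int.le_of_dvd one_pos h
  have := hp.out.two_le
  omega

theorem finDim (c : Core p K L vK vL κ θ s) : FiniteDimensional K L :=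
  FiniteDimensional.of_finrank_pos (by rw [c.hfin]; exact hp.out.pos)

theorem top (c : Core p K L vK vL κ θ s) : IntermediateField.adjoin K {θ} = ⊤ :=
  adj_top c.hK c.hfin c.hκ0 (by rw [c.hκ]; exact not_dvd_one) c.hθ

theorem theta (c : Core p K L vK vL κ θ s) : θ ≠ 0 ∧ vL θ = 1 := by
  obtain ⟨h1, h2⟩ := theta_val c.hL c.hext c.hκ0 c.hθ
  refine ⟨h1, mul_left_cancel₀ (a := (p : ℤ)) (by exact_mod_cast hp.out.ne_zero) ?_⟩
  rw [h2, c.hκ]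

theorem vterm (c : Core p K L vK vL κ θ s) {a : K} (ha : a ≠ 0) (n : ℕ) :
    vL (algebraMap K L a * θ ^ n) = p * vK a + n := by
  rw [v_mul c.hL (by simpa using ha) (pow_ne_zero _ c.theta.1), v_pow c.hL c.theta.1, c.theta.2,
    c.hext _ ha, mul_one]

theorem coords (c : Core p K L vK vL κ θ s) {n : ℤ} {x : L} (hx : Fil vL n x) :
    ∃ a : ℕ → K, x = ∑ i ∈ Finset.range p, algebraMap K L (a i) * θ ^ i ∧
      ∀ i ∈ Finset.range p, Fil vL n (algebraMap K L (a i) * θ ^ i) := by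
  obtain ⟨a, ha⟩ := expand c.hθ c.top x
  refine ⟨a, ha, ?_⟩
  by_cases hne : ∃ i ∈ Finset.range p, algebraMap K L (a i) * θ ^ i ≠ 0
  · obtain ⟨i, hi, hfi, h0, hvi, hall⟩ := sum_min c.hL (Finset.range p)
      (fun i => algebraMap K L (a i) * θ ^ i) (by
        intro i hi j hj hi0 hj0 hij heq
        have hai : a i ≠ 0 := by intro h; simp [h] at hi0
        have haj : a j ≠ 0 := by intro h; simp [h] at hj0
        rw [c.vterm hai, c.vterm haj] at heq
        rw [Finset.mem_range] at hi hj
        have hc : (p : ℤ) * (vK (a j) - vK (a i)) = i - j := by linarith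
        have hc0 : vK (a j) - vK (a i) = 0 := by
          by_contra hc0
          rcases lt_or_gt_of_ne hc0 with h5 | h5
          · nlinarith
          · nlinarith
        rw [hc0] at hc
        apply hij; omega) hne
    rw [← ha] at h0 hvi
    have h1 := hx.resolve_left h0
    intro j hj
    exact fil_mono (by rw [← hvi]; exact h1) (hall j hj)
  · push Not at hne
    intro i hi
    exact Or.inl (hne i hi)

theorem filK (c : Core p K L vK vL κ θ s) {m n : ℤ} (hmn : p * n < m + p) {y : K}
    (hy : Fil vL m (algebraMap K L y)) : Fil vK n y := by
  by_cases hy0 : y = 0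
  · exact Or.inl hy0
  right
  have h1 := hy.resolve_left (by simpa using hy0)
  rw [c.hext _ hy0] at h1
  have hp0 : (0 : ℤ) < p := by exact_mod_cast hp.out.pos
  by_contra h2
  push Not at h2
  nlinarith

theorem filL (c : Core p K L vK vL κ θ s) {n : ℤ} {y : K} (hy : Fil vK n y) :
    Fil vL (p * n) (algebraMap K L y) := by
  rcases hy with rfl | hy
  · left; simp
  by_cases hy0 : y = 0
  · left; simp [hy0]
  right; rw [c.hext _ hy0]
  exact mul_le_mul_of_nonneg_left hy (by positivity)

theorem approx (c : Core p K L vK vL κ θ s) (n : ℕ) {x : L} (hx : Fil vL n x) :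
    ∃ a : K, Fil vK 0 a ∧ Fil vL (n + 1) (x - algebraMap K L a * θ ^ n) := by
  have hθ0 := c.theta.1
  have hx1 : Fil vL 0 (x / θ ^ n) := by
    have := fil_mul c.hL hx (Or.inr (v_inv c.hL (pow_ne_zero n hθ0)).ge : Fil vL _ (θ ^ n)⁻¹)
    rwa [v_pow c.hL hθ0, c.theta.2, mul_one, add_neg_cancel, ← div_eq_mul_inv] at this
  obtain ⟨a, ha, hf⟩ := c.coords hx1
  have hp1 := hp.out.two_le
  refine ⟨a 0, ?_, ?_⟩
  · have := hf 0 (by simp; omega)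
    rw [pow_zero, mul_one] at this
    exact c.filK (by omega) this
  · have h1 : Fil vL 1 (x / θ ^ n - algebraMap K L (a 0)) := by
      obtain ⟨q, hq⟩ : ∃ q, p = q + 1 := ⟨p - 1, by omega⟩
      rw [hq, Finset.sum_range_succ'] at ha
      simp only [pow_zero, mul_one] at ha
      rw [ha, add_sub_cancel_right]
      apply fil_sum c.hL
      intro i hi
      have h2 := hf (i + 1) (by simp at hi ⊢; omega)
      by_cases h0 : a (i + 1) = 0
      · left; simp [h0]
      · right
        have h3 := h2.resolve_left (mul_ne_zero (by simpa using h0) (pow_ne_zero _ hθ0))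
        rw [c.vterm h0] at h3 ⊢
        rw [Finset.mem_range] at hi
        by_contra h4
        have h5 : (p : ℤ) * vK (a (i + 1)) = - (i + 1) := by push_cast at h3 h4; omega
        have h6 : vK (a (i + 1)) < 0 := by
          by_contra h7
          push Not at h7
          have : 0 ≤ (p : ℤ) * vK (a (i + 1)) := by positivity
          omega
        nlinarith
    have h2 := fil_mul c.hL h1 (fil_self (v := vL) (θ ^ n))
    rw [v_pow c.hL hθ0, c.theta.2, mul_one, sub_mul, div_mul_cancel₀ _ (pow_ne_zero _ hθ0)] at h2
    exact fil_mono (by omega) h2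

theorem sigma_fil (c : Core p K L vK vL κ θ s) (σ : L ≃ₐ[K] L) {n : ℤ} {x : L}
    (hx : Fil vL n x) : Fil vL n (σ x) := by
  obtain ⟨a, ha, hf⟩ := c.coords hx
  have hθ0 := c.theta.1
  have h1 : (σ θ / θ) ^ p = 1 := by
    rw [div_pow, ← map_pow, c.hθ, AlgEquiv.commutes, div_self]
    simpa using c.hκ0
  have h10 : σ θ / θ ≠ 0 := div_ne_zero (by simpa using hθ0) hθ0
  have h2 : vL (σ θ / θ) = 0 := by
    have := v_pow c.hL h10 p
    rw [h1, v_one c.hL] at this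
    rcases mul_eq_zero.1 this.symm with h | h
    · have := hp.out.ne_zero; omega
    · exact h
  rw [ha, map_sum]
  apply fil_sum c.hL
  intro i hi
  have h3 := fil_mul c.hL (fil_pow c.hL (Or.inr h2.ge : Fil vL 0 (σ θ / θ)) i) (hf i hi)
  rw [mul_zero, zero_add] at h3
  convert h3 using 1
  rw [map_mul, AlgEquiv.commutes, map_pow, div_pow]
  field_simp

theorem v_sigma (c : Core p K L vK vL κ θ s) (σ : L ≃ₐ[K] L) {x : L} (hx : x ≠ 0) :
    vL (σ x) = vL x := by
  have h1 := (c.sigma_fil σ (fil_self (v := vL) x)).resolve_left (by simpa using hx)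
  have h2 := (c.sigma_fil σ.symm (fil_self (v := vL) (σ x))).resolve_left (by simpa using hx)
  rw [AlgEquiv.symm_apply_apply] at h2
  omega

theorem norm_prod (c : Core p K L vK vL κ θ s) : ∃ g : Fin p → (L ≃ₐ[K] L),
    ∀ x : L, algebraMap K L (Algebra.norm K x) = ∏ i, g i x := by
  have := c.finDim
  have := c.hgal
  have hcard : Fintype.card (L ≃ₐ[K] L) = p := by
    rw [← c.hfin, ← IsGalois.card_aut_eq_finrank, Nat.card_eq_fintype_card]
  refine ⟨(Fintype.equivFinOfCardEq hcard).symm, fun x => ?_⟩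
  rw [Algebra.norm_eq_prod_automorphisms K x]
  exact ((Fintype.equivFinOfCardEq hcard).symm.prod_comp (fun σ : L ≃ₐ[K] L => σ x)).symm

theorem v_prod (h : IsNormalizedVal p L vL) {ι : Type*} (t : Finset ι) (f : ι → L) (n : ℤ)
    (h0 : ∀ i ∈ t, f i ≠ 0) (hf : ∀ i ∈ t, vL (f i) = n) : vL (∏ i ∈ t, f i) = t.card * n := by
  classical
  induction t using Finset.induction_on with
  | empty => simp [v_one h]
  | insert a t ha ih =>
    rw [Finset.prod_insert ha, v_mul h (h0 _ (by simp))
      (Finset.prod_ne_zero_iff.2 fun i hi => h0 i (by simp [hi])), hf a (by simp),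
      ih (fun i hi => h0 i (by simp [hi])) (fun i hi => hf i (by simp [hi])),
      Finset.card_insert_of_notMem ha]
    push_cast; ring

theorem v_norm (c : Core p K L vK vL κ θ s) {x : L} (hx : x ≠ 0) :
    vK (Algebra.norm K x) = vL x := by
  have := c.finDim
  have hn : Algebra.norm K x ≠ 0 := Algebra.norm_ne_zero_iff.2 hx
  obtain ⟨g, hg⟩ := c.norm_prod
  have h1 := c.hext _ hn
  rw [hg x, v_prod c.hL _ _ (vL x) (fun i _ => by simpa using hx) (fun i _ => c.v_sigma _ hx),
    Finset.card_univ, Fintype.card_fin] at h1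
  exact (mul_left_cancel₀ (by exact_mod_cast hp.out.ne_zero) h1).symm

theorem norm_high (c : Core p K L vK vL κ θ s) {n : ℕ} {x : L} (hx : Fil vL (p * n) (x - 1)) :
    Fil vK n (Algebra.norm K x - 1) := by
  obtain ⟨g, hg⟩ := c.norm_prod
  have hp0 := hp.out.pos
  apply c.filK (m := p * n) (by omega)
  rw [map_sub, hg x, map_one]
  apply one_fil_prod c.hL (by positivity)
  intro i _
  have := c.sigma_fil (g i) hx
  simpa using this

theorem norm_gen1 (c : Core p K L vK vL κ θ s) {n : ℕ} (hn : ¬ p ∣ n) (a : K) :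
    Algebra.norm K (1 - algebraMap K L a * θ ^ n) = 1 - a ^ p * κ ^ n := by
  by_cases ha : a = 0
  · simp [ha, hp.out.ne_zero]
  apply norm_one_sub c.hK c.hfin (mul_ne_zero (pow_ne_zero _ ha) (pow_ne_zero _ c.hκ0))
  · rw [v_mul c.hK (pow_ne_zero _ ha) (pow_ne_zero _ c.hκ0), v_pow c.hK ha, v_pow c.hK c.hκ0, c.hκ,
      mul_one]
    intro h
    exact hn (by exact_mod_cast (dvd_add_right (Dvd.intro _ rfl)).1 h)
  · rw [mul_pow, ← pow_mul, mul_comm n p, pow_mul, c.hθ]; simp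

theorem norm_gen2 (c : Core p K L vK vL κ θ s) (j : ℕ) (a : K) :
    Algebra.norm K (1 - algebraMap K L a * θ ^ (p * j)) = (1 - a * κ ^ j) ^ p := by
  have : 1 - algebraMap K L a * θ ^ (p * j) = algebraMap K L (1 - a * κ ^ j) := by
    rw [pow_mul, c.hθ]; simp
  rw [this, Algebra.norm_algebraMap, c.hfin]

theorem decomp (c : Core p K L vK vL κ θ s) {n : ℕ} (hn : 1 ≤ n) {x : L} (hx : Fil vL n (x - 1)) :
    ∃ a : K, Fil vK 0 a ∧ ∃ x' : L, x = (1 - algebraMap K L a * θ ^ n) * x' ∧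
      Fil vL (n + 1) (x' - 1) ∧ Fil vL (n + 1) (x - (1 - algebraMap K L a * θ ^ n)) := by
  obtain ⟨a, ha, hr⟩ := c.approx n hx
  set y := 1 - algebraMap K L (-a) * θ ^ n with hy
  have hy1 : Fil vL n (y - 1) := by
    have h1 := fil_sub c.hL hx (fil_mono (by omega) hr)
    convert h1 using 1
    rw [hy, map_neg]; ring
  obtain ⟨hy0, hvy⟩ := unit_of_fil c.hL (by omega) hy1
  have hxy : Fil vL (n + 1) (x - y) := by
    convert hr using 1
    rw [hy, map_neg]; ring
  refine ⟨-a, fil_neg c.hK ha, x / y, (mul_div_cancel₀ _ hy0).symm, ?_, hxy⟩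
  have : x / y - 1 = (x - y) * y⁻¹ := by field_simp
  rw [this]
  have h2 : Fil vL 0 y⁻¹ := Or.inr (by rw [v_inv c.hL hy0, hvy]; simp)
  simpa using fil_mul c.hL hxy h2

theorem vK_kappa_pow (c : Core p K L vK vL κ θ s) (n : ℕ) : vK (κ ^ n) = n := by
  rw [v_pow c.hK c.hκ0, c.hκ, mul_one]

theorem norm_gen_fil (c : Core p K L vK vL κ θ s) {n : ℕ} {a : K} (ha : Fil vK 0 a) :
    Fil vK (min n (p * s + 1)) (Algebra.norm K (1 - algebraMap K L a * θ ^ n) - 1) := by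
  have hp2 : (2 : ℤ) ≤ p := by exact_mod_cast hp.out.two_le
  have hs := c.hs
  by_cases hn : p ∣ n
  · obtain ⟨j, rfl⟩ := hn
    rw [c.norm_gen2]
    have hy : Fil vK j (-(a * κ ^ j)) := by
      have := fil_neg c.hK (fil_mul c.hK ha (fil_self (v := vK) (κ ^ j)))
      rwa [c.vK_kappa_pow, zero_add] at this
    have hb := binom hp.out c.hK (by positivity) hy
    have e : (1 - a * κ ^ j) ^ p - 1 = ((1 + -(a * κ ^ j)) ^ p - 1 - p * (-(a * κ ^ j))
      - (-(a * κ ^ j)) ^ p) + p * (-(a * κ ^ j)) + (-(a * κ ^ j)) ^ p := by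
      rw [← sub_eq_add_neg]; ring
    rw [e]
    have hmin : min ((p * j : ℕ) : ℤ) (p * s + 1) ≤ vK p + j := by
      rw [← hs]
      by_cases hjs : j ≤ s
      · apply (min_le_left _ _).trans
        push_cast
        have : (j : ℤ) ≤ s := by exact_mod_cast hjs
        nlinarith
      · apply (min_le_right _ _).trans
        have : (s : ℤ) + 1 ≤ j := by omega
        nlinarith
    refine fil_add c.hK (fil_add c.hK (fil_mono (by omega) hb) ?_) ?_
    · exact fil_mono hmin (fil_mul c.hK (fil_self (v := vK) (p : K)) hy)
    · refine fil_mono ?_ (fil_pow c.hK hy p)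
      apply (min_le_left _ _).trans; push_cast; rfl
  · rw [c.norm_gen1 hn, sub_sub_cancel_left]
    apply fil_neg c.hK
    have := fil_mul c.hK (fil_pow c.hK ha p) (fil_self (v := vK) (κ ^ n))
    rw [c.vK_kappa_pow, mul_zero, zero_add] at this
    exact fil_mono (min_le_left _ _) this

theorem norm_fil (c : Core p K L vK vL κ θ s) {m : ℕ} (hm : 1 ≤ m) {x : L}
    (hx : Fil vL m (x - 1)) : Fil vK (min m (p * s + 1)) (Algebra.norm K x - 1) := by
  have key : ∀ (k m : ℕ), 1 ≤ m → p * (p * s + 1) ≤ m + k → ∀ x : L, Fil vL m (x - 1) →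
      Fil vK (min m (p * s + 1)) (Algebra.norm K x - 1) := by
    intro k
    induction k with
    | zero =>
      intro m hm hmk x hx
      have := c.norm_high (n := p * s + 1) (x := x) (fil_mono (by exact_mod_cast hmk) hx)
      exact fil_mono ((min_le_right _ _).trans (by push_cast; rfl)) this
    | succ k ih =>
      intro m hm hmk x hx
      obtain ⟨a, ha, x', rfl, hx', -⟩ := c.decomp hm hx
      rw [map_mul]
      refine one_fil_mul c.hK (le_min (by positivity) (by positivity)) (c.norm_gen_fil ha) ?_
      have := ih (m + 1) (by omega) (by omega) x' (by exact_mod_cast hx')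
      refine fil_mono (min_le_min_right _ (by push_cast; omega)) this
  exact key (p * (p * s + 1)) m hm (by omega) x hx

theorem climb_zero (c : Core p K L vK vL κ θ s) {x : L} (hx0 : x ≠ 0)
    (hN : Fil vK 1 (Algebra.norm K x - 1)) : Fil vL 1 (x - 1) := by
  obtain ⟨-, hN1⟩ := unit_of_fil c.hK one_pos hN
  rw [c.v_norm hx0] at hN1
  obtain ⟨a, ha, hr⟩ := c.approx 0 (x := x) (Or.inr (by simp [hN1]))
  simp only [pow_zero, mul_one, Nat.cast_zero, zero_add] at hr
  have hp2 : (2 : ℤ) ≤ p := by exact_mod_cast hp.out.two_le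
  obtain ⟨ha0', hva'⟩ := v_add_eq c.hL (y := algebraMap K L a - x) hx0 (by
    rw [hN1]; simpa using fil_neg c.hL hr)
  rw [add_sub_cancel, hN1] at hva'
  rw [add_sub_cancel] at ha0'
  have ha0 : a ≠ 0 := by simpa using ha0'
  have hx' : Fil vL 1 (x / algebraMap K L a - 1) := by
    have e : x / algebraMap K L a - 1 = (x - algebraMap K L a) * (algebraMap K L a)⁻¹ := by
      field_simp
    rw [e]
    have h2 : Fil vL 0 (algebraMap K L a)⁻¹ := Or.inr (by rw [v_inv c.hL ha0', hva']; simp)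
    simpa using fil_mul c.hL hr h2
  have h1 := c.norm_fil (m := 1) le_rfl (by exact_mod_cast hx')
  have h1 : Fil vK 1 (Algebra.norm K (x / algebraMap K L a) - 1) := fil_mono (by
    have : (0 : ℤ) ≤ p * s := by positivity
    apply le_min <;> push_cast <;> omega) h1
  have h2 : Fil vK 1 (a ^ p - 1) := by
    have h3 := one_fil_div c.hK one_pos hN h1
    have : FiniteDimensional K L := c.finDim
    have hn0 : Algebra.norm K x ≠ 0 := Algebra.norm_ne_zero_iff.2 hx0
    have e : Algebra.norm K x / Algebra.norm K (x / algebraMap K L a) = a ^ p := by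
      have e2 : Algebra.norm K x = Algebra.norm K (x / algebraMap K L a) * a ^ p := by
        conv_lhs => rw [← div_mul_cancel₀ x ha0', map_mul, Algebra.norm_algebraMap, c.hfin]
      rw [div_eq_iff, mul_comm, ← e2]
      intro h; rw [h, zero_mul] at e2; exact hn0 e2
    rwa [e] at h3
  have he : 0 < vK (p : K) := c.hK.2.2.2
  have hy : Fil vK 0 (a - 1) := fil_sub c.hK ha (fil_one c.hK)
  have hb := binom hp.out c.hK le_rfl hy
  have h3 : Fil vK 1 ((a - 1) ^ p) := by
    have e : (a - 1) ^ p = (a ^ p - 1) - p * (a - 1)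
      - ((1 + (a - 1)) ^ p - 1 - p * (a - 1) - (a - 1) ^ p) := by
      rw [add_sub_cancel]; ring
    rw [e]
    refine fil_sub c.hK (fil_sub c.hK h2 ?_) (fil_mono (by omega) hb)
    exact fil_mono (by omega) (fil_mul c.hK (fil_self (v := vK) (p : K)) hy)
  have h4 : Fil vK 1 (a - 1) := by
    by_cases h0 : a - 1 = 0
    · exact Or.inl h0
    · right
      have := h3.resolve_left (pow_ne_zero _ h0)
      rw [v_pow c.hK h0] at this
      by_contra h5
      push Not at h5
      nlinarith
  have h5 := fil_add c.hL hr (fil_mono (by omega) (c.filL h4))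
  simpa using h5

theorem climb_step (c : Core p K L vK vL κ θ s) {n : ℕ} (hn : 1 ≤ n) (hns : n < p * s) {x : L}
    (hx : Fil vL n (x - 1)) (hN : Fil vK (n + 1) (Algebra.norm K x - 1)) :
    Fil vL (n + 1) (x - 1) := by
  have hp2 : (2 : ℤ) ≤ p := by exact_mod_cast hp.out.two_le
  have hs := c.hs
  have hns' : (n : ℤ) < p * s := by exact_mod_cast hns
  obtain ⟨a, ha, x', hxx, hx', hxy⟩ := c.decomp hn hx
  have h1 := c.norm_fil (m := n + 1) (by omega) (by exact_mod_cast hx')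
  have h1 : Fil vK (n + 1) (Algebra.norm K x' - 1) := fil_mono (by
    push_cast; apply le_min <;> omega) h1
  have h2 : Fil vK (n + 1) (Algebra.norm K (1 - algebraMap K L a * θ ^ n) - 1) := by
    have h3 := one_fil_div c.hK (by omega) hN h1
    obtain ⟨h4, -⟩ := unit_of_fil c.hK (by omega) h1
    rwa [hxx, map_mul, mul_div_cancel_right₀ _ h4] at h3
  have h3 : Fil vK 1 a := by
    by_contra hcon
    have ha0 : a ≠ 0 := fun h => hcon (Or.inl h)
    have hva : vK a = 0 := by
      have h4 := ha.resolve_left ha0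
      have h5 : ¬ 1 ≤ vK a := fun h => hcon (Or.inr h)
      omega
    by_cases hd : p ∣ n
    · obtain ⟨j, rfl⟩ := hd
      rw [c.norm_gen2] at h2
      have hjs : (j : ℤ) + 1 ≤ s := by
        have := Nat.lt_of_mul_lt_mul_left hns
        omega
      have hy0 : -(a * κ ^ j) ≠ 0 := neg_ne_zero.2 (mul_ne_zero ha0 (pow_ne_zero _ c.hκ0))
      have hvy : vK (-(a * κ ^ j)) = j := by
        rw [v_neg c.hK, v_mul c.hK ha0 (pow_ne_zero _ c.hκ0), hva, c.vK_kappa_pow, zero_add]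
      have hy : Fil vK j (-(a * κ ^ j)) := Or.inr hvy.ge
      have hb := binom hp.out c.hK (by positivity) hy
      have e : (-(a * κ ^ j)) ^ p = ((1 - a * κ ^ j) ^ p - 1) - p * (-(a * κ ^ j))
        - ((1 + -(a * κ ^ j)) ^ p - 1 - p * (-(a * κ ^ j)) - (-(a * κ ^ j)) ^ p) := by
        rw [← sub_eq_add_neg]; ring
      have hlt : ((p * j : ℕ) : ℤ) + 1 ≤ vK p + j := by
        rw [← hs]; push_cast; nlinarith
      have h6 : Fil vK ((p * j : ℕ) + 1) ((-(a * κ ^ j)) ^ p) := by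
        rw [e]
        refine fil_sub c.hK (fil_sub c.hK h2 ?_) (fil_mono (by omega) hb)
        exact fil_mono hlt (fil_mul c.hK (fil_self (v := vK) (p : K)) hy)
      refine not_fil (pow_ne_zero _ hy0) ?_ h6
      rw [v_pow c.hK hy0, hvy]; push_cast; omega
    · rw [c.norm_gen1 hd, sub_sub_cancel_left] at h2
      have h6 := fil_neg c.hK h2
      rw [neg_neg] at h6
      refine not_fil (mul_ne_zero (pow_ne_zero _ ha0) (pow_ne_zero _ c.hκ0)) ?_ h6
      rw [v_mul c.hK (pow_ne_zero _ ha0) (pow_ne_zero _ c.hκ0), v_pow c.hK ha0, hva,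
        c.vK_kappa_pow]; simp
  have h4 := fil_mul c.hL (c.filL h3) (fil_self (v := vL) (θ ^ n))
  rw [v_pow c.hL c.theta.1, c.theta.2] at h4
  have h5 := fil_sub c.hL hxy (fil_mono (by omega) h4)
  convert h5 using 1
  ring

theorem climb (c : Core p K L vK vL κ θ s) (hs0 : 0 < s) {x : L} (hx0 : x ≠ 0)
    (hN : Fil vK (p * s) (Algebra.norm K x - 1)) : Fil vL (p * s) (x - 1) := by
  have hps : 1 ≤ p * s := Nat.mul_pos hp.out.pos hs0
  have key : ∀ n : ℕ, 1 ≤ n → n ≤ p * s → Fil vL n (x - 1) := by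
    intro n hn
    induction n, hn using Nat.le_induction with
    | base =>
      intro _
      exact_mod_cast c.climb_zero hx0 (fil_mono (by exact_mod_cast hps) hN)
    | succ n hn ih =>
      intro h
      have := c.climb_step hn (by omega) (ih (by omega)) (fil_mono (by exact_mod_cast h) hN)
      exact_mod_cast this
  exact_mod_cast key _ hps le_rfl

theorem norm_power (c : Core p K L vK vL κ θ s) (hs0 : 0 < s) {x : L} (hx0 : x ≠ 0)
    (hN : Fil vK (p * s) (Algebra.norm K x - 1)) :
    ∃ b : K, Fil vK s b ∧ Fil vK (p * s + 1) ((1 + b) ^ p - Algebra.norm K x) := by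
  have hps : 1 ≤ p * s := Nat.mul_pos hp.out.pos hs0
  have hx := c.climb hs0 hx0 hN
  obtain ⟨a, ha, x', hxx, hx', -⟩ := c.decomp hps (x := x) (by exact_mod_cast hx)
  have h1 := c.norm_fil (m := p * s + 1) (by omega) (by exact_mod_cast hx')
  have h1 : Fil vK (p * s + 1) (Algebra.norm K x' - 1) := fil_mono (by push_cast; simp) h1
  have hb : Fil vK s (-(a * κ ^ s)) := by
    have := fil_neg c.hK (fil_mul c.hK ha (fil_self (v := vK) (κ ^ s)))
    rwa [c.vK_kappa_pow, zero_add] at this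
  refine ⟨_, hb, ?_⟩
  rw [hxx, map_mul, c.norm_gen2, ← sub_eq_add_neg]
  have e : (1 - a * κ ^ s) ^ p - (1 - a * κ ^ s) ^ p * Algebra.norm K x'
    = -((1 - a * κ ^ s) ^ p * (Algebra.norm K x' - 1)) := by ring
  rw [e]
  have h2 : Fil vK 0 (1 - a * κ ^ s) := by
    rw [sub_eq_add_neg]; exact fil_add c.hK (fil_one c.hK) (fil_mono (by positivity) hb)
  have := fil_neg c.hK (fil_mul c.hK (fil_pow c.hK h2 p) h1)
  simpa using this

end Core

theorem exists_core {p : ℕ} [hp : Fact p.Prime] {K L : Type*} [Field K] [Field L] [Algebra K L]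
    {vK : K → ℤ} {vL : L → ℤ} {κ : K} {θ : L} {s : ℕ}
    (hK : IsNormalizedVal p K vK) (hL : IsNormalizedVal p L vL)
    (hext : ∀ x : K, x ≠ 0 → vL (algebraMap K L x) = p * vK x)
    (hκ0 : κ ≠ 0) (hκ : ¬ (p : ℤ) ∣ vK κ) (hθ : θ ^ p = algebraMap K L κ)
    (hfin : Module.finrank K L = p) (hgal : IsGalois K L) (hζ : ∃ ζ : K, IsPrimitiveRoot ζ p)
    (hs : ((p : ℤ) - 1) * s = vK (p : K)) :
    ∃ (κ' : K) (θ' : L), Core p K L vK vL κ' θ' s := by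
  obtain ⟨π, hπ0, hπ⟩ := hK.2.2.1
  have hpp : Prime (p : ℤ) := Nat.prime_iff_prime_int.1 hp.out
  have hθ0 : θ ≠ 0 := by
    rintro rfl
    rw [zero_pow hp.out.ne_zero] at hθ
    exact hκ0 (by simpa using hθ.symm)
  obtain ⟨b, a, hab⟩ := (hpp.irreducible.coprime_iff_not_dvd).2 hκ
  refine ⟨κ ^ a * (π ^ b) ^ p, θ ^ a * algebraMap K L (π ^ b), hK, hL, hext,
    mul_ne_zero (zpow_ne_zero _ hκ0) (pow_ne_zero _ (zpow_ne_zero _ hπ0)), ?_, ?_, hfin, hgal, hζ, hs⟩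
  · rw [v_mul hK (zpow_ne_zero _ hκ0) (pow_ne_zero _ (zpow_ne_zero _ hπ0)), v_zpow hK hκ0,
      v_pow hK (zpow_ne_zero _ hπ0), v_zpow hK hπ0, hπ]
    linarith
  · have e1 : algebraMap K L (κ ^ a) = (θ ^ a) ^ p := by
      rw [map_zpow₀, ← hθ, ← zpow_natCast, ← zpow_natCast, ← zpow_mul, ← zpow_mul, mul_comm]
    rw [mul_pow, map_mul, e1, map_pow]

end KummerCond

/-- Let `K` be a `p`-adic field containing the `p`-th roots of unity,
with absolute ramification index `e_K = v_K(p)`, and let `κ ∈ K^×` with `v_K(κ)` not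
divisible by `p`.  Then `L = K(κ^{1/p})` is a totally ramified cyclic extension of
degree `p` with abelian conductor exponent `f(L/K) = p·e_K/(p−1) + 1` (expressed as
`(p−1)·(f(L/K) − 1) = p·e_K`), and this is the maximal possible conductor exponent for
cyclic degree-`p` extensions of `K`. -/
theorem kummer_extension_nonunit_conductor
    (p : ℕ) [Fact p.Prime]
    (K : Type*) [Field K] [Algebra ℚ_[p] K] [FiniteDimensional ℚ_[p] K]
    (vK : K → ℤ) (hvK : IsNormalizedVal p K vK)
    (hμ : ∃ ζ : K, IsPrimitiveRoot ζ p)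
    (κ : K) (hκ0 : κ ≠ 0) (hκ : ¬ ((p : ℤ) ∣ vK κ))
    (L : Type v) [Field L] [Algebra K L]
    (θ : L) (hθ : θ ^ p = algebraMap K L κ)
    (hLθ : IntermediateField.adjoin K {θ} = ⊤)
    (vL : L → ℤ) (hvL : IsNormalizedVal p L vL)
    (hext : ∃ e : ℤ, 0 < e ∧ ∀ x : K, x ≠ 0 → vL (algebraMap K L x) = e * vK x) :
    Module.finrank K L = p ∧
    IsGalois K L ∧ IsCyclic (L ≃ₐ[K] L) ∧
    (∀ x : K, x ≠ 0 → vL (algebraMap K L x) = (p : ℤ) * vK x) ∧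
    ((p : ℤ) - 1) * ((condExp vK L : ℤ) - 1) = (p : ℤ) * vK ((p : K)) ∧
    (∀ (L' : Type v) [Field L'] [Algebra K L'] [FiniteDimensional K L'],
      IsGalois K L' → IsCyclic (L' ≃ₐ[K] L') → Module.finrank K L' = p →
        ((p : ℤ) - 1) * ((condExp vK L' : ℤ) - 1) ≤ (p : ℤ) * vK ((p : K))) := by
  have hp : p.Prime := Fact.out
  obtain ⟨e, he, hext⟩ := hext
  obtain rfl : e = p := KummerCond.ram_eq hvL he hext hκ0 hκ hθ hLθ
  have hfin : Module.finrank K L = p := KummerCond.finrank_eq hvK hκ0 hκ hθ hLθ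
  have hfd : FiniteDimensional K L :=
    FiniteDimensional.of_finrank_pos (by rw [hfin]; exact hp.pos)
  obtain ⟨ζ, hζ⟩ := hμ
  have hgc : IsGalois K L ∧ IsCyclic (L ≃ₐ[K] L) := by
    have hprim : (primitiveRoots (Module.finrank K L) K).Nonempty :=
      ⟨ζ, by rw [hfin, mem_primitiveRoots hp.pos]; exact hζ⟩
    have h02 := (isCyclic_tfae K L hprim).out 0 2
    exact h02.2 ⟨θ, ⟨κ, by rw [hfin, hθ]⟩, hLθ⟩
  obtain ⟨hl0, hls, hlpos⟩ := KummerCond.lam_val hvK hζ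
  obtain ⟨s, hs⟩ := Int.eq_ofNat_of_zero_le hlpos.le
  have hs' : ((p : ℤ) - 1) * s = vK (p : K) := by rw [← hs]; exact hls
  have hs0 : 0 < s := by omega
  have hmem : ∀ (L' : Type v) [Field L'] [Algebra K L'], Module.finrank K L' = p →
      ∀ u : K, u ≠ 0 → vK u = 0 →
      (p * s + 1 = 0 ∨ u = 1 ∨ ((p * s + 1 : ℕ) : ℤ) ≤ vK (u - 1)) →
      ∃ x : L', x ≠ 0 ∧ Algebra.norm K x = u := by
    intro L' _ _ hf u hu0 hvu hu
    obtain ⟨y, hy⟩ := KummerCond.pth_power hvK hs' u (by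
      rcases hu with h | h | h
      · omega
      · left; simp [h]
      · right; exact_mod_cast h)
    have hy0 : y ≠ 0 := by rintro rfl; rw [zero_pow hp.ne_zero] at hy; exact hu0 hy.symm
    exact ⟨algebraMap K L' y, by simpa using hy0, by rw [Algebra.norm_algebraMap, hf, hy]⟩
  refine ⟨hfin, hgc.1, hgc.2, hext, ?_, ?_⟩
  · have hc : condExp vK L = p * s + 1 := by
      apply le_antisymm
      · exact Nat.sInf_le (hmem L hfin)
      · have hin : (p * s + 1) ∈ {n : ℕ | ∀ u : K, u ≠ 0 → vK u = 0 →
            (n = 0 ∨ u = 1 ∨ (n : ℤ) ≤ vK (u - 1)) →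
            ∃ x : L, x ≠ 0 ∧ Algebra.norm K x = u} := hmem L hfin
        refine le_csInf ⟨_, hin⟩ ?_
        intro n hn
        by_contra hlt
        push Not at hlt
        obtain ⟨κ', θ', c⟩ := KummerCond.exists_core hvK hvL hext hκ0 hκ hθ hfin hgc.1 ⟨ζ, hζ⟩ hs'
        obtain ⟨d, hd0, hd⟩ := KummerCond.exists_nonpower hvK hs' (ζ - 1) hl0 hs
          (by rw [add_sub_cancel, hζ.pow_eq_one])
        have hu : KummerCond.Fil vK (p * s) ((1 + d * (ζ - 1) ^ p) - 1) := by
          have := KummerCond.fil_mul hvK hd0 (KummerCond.fil_self (v := vK) ((ζ - 1) ^ p))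
          rw [KummerCond.v_pow hvK hl0, hs, zero_add] at this
          rwa [add_sub_cancel_left]
        have hps : (0 : ℤ) < p * s := by exact_mod_cast Nat.mul_pos hp.pos hs0
        obtain ⟨hu0, hvu⟩ := KummerCond.unit_of_fil hvK hps hu
        obtain ⟨x, hx0, hx⟩ := hn _ hu0 hvu (by
          right
          rcases hu with h | h
          · left; exact sub_eq_zero.1 h
          · right
            refine le_trans ?_ h
            exact_mod_cast Nat.le_of_lt_succ hlt)
        obtain ⟨b, hb, hbb⟩ := c.norm_power hs0 hx0 (by rw [hx]; exact hu)
        rw [hx] at hbb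
        exact hd b hb hbb
    rw [hc, ← hs']; push_cast; ring
  · intro L' _ _ _ _ _ hf
    have h1 : condExp vK L' ≤ p * s + 1 := Nat.sInf_le (hmem L' hf)
    have h2 : (condExp vK L' : ℤ) - 1 ≤ p * s := by
      have : (condExp vK L' : ℤ) ≤ ((p * s + 1 : ℕ) : ℤ) := by exact_mod_cast h1
      push_cast at this; omega
    have hp1 : (0 : ℤ) ≤ (p : ℤ) - 1 := by have := hp.one_lt; omega
    calc ((p : ℤ) - 1) * ((condExp vK L' : ℤ) - 1) ≤ ((p : ℤ) - 1) * (p * s) :=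
          mul_le_mul_of_nonneg_left h2 hp1
      _ = _ := by rw [← hs']; ring
end

section
/- Let K be a p-adic field containing μ_p and κ = 1 + u·π_K^n with u a unit, 1 ≤ n < p·e_K/(p−1), and n not divisible by p. Then L = K(κ^{1/p}) is totally ramified of degree p over K with abelian conductor exponent f(L/K) = p·e_K/(p−1) − n + 1. -/
universe v

/-- `x = 0` or `m ≤ v x`. -/
def VGe {F : Type*} [Field F] (v : F → ℤ) (m : ℤ) (x : F) : Prop := x ≠ 0 → m ≤ v x

section basics
variable {p : ℕ} {F : Type*} [Field F] {v : F → ℤ}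

theorem vge_zero (m : ℤ) : VGe v m (0 : F) := fun h => absurd rfl h

theorem VGe.mono {m m' : ℤ} {x : F} (h : VGe v m x) (hm : m' ≤ m) : VGe v m' x :=
  fun hx => hm.trans (h hx)

theorem vge_of_eq {m : ℤ} {x : F} (h : v x = m) : VGe v m x := fun _ => h.ge

theorem val_mul (hv : IsNormalizedVal p F v) {x y : F} (hx : x ≠ 0) (hy : y ≠ 0) :
    v (x * y) = v x + v y := hv.1 x y hx hy

theorem val_one (hv : IsNormalizedVal p F v) : v 1 = 0 := by
  have := val_mul hv (one_ne_zero (α := F)) one_ne_zero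
  rw [mul_one] at this; omega

theorem val_pow (hv : IsNormalizedVal p F v) {x : F} (hx : x ≠ 0) (k : ℕ) :
    v (x ^ k) = k * v x := by
  induction k with
  | zero => simp [val_one hv]
  | succ k ih => rw [pow_succ, val_mul hv (pow_ne_zero _ hx) hx, ih]; push_cast; ring

theorem val_inv (hv : IsNormalizedVal p F v) {x : F} (hx : x ≠ 0) : v (x⁻¹) = - v x := by
  have := val_mul hv hx (inv_ne_zero hx)
  rw [mul_inv_cancel₀ hx, val_one hv] at this; omega

theorem val_neg_one (hv : IsNormalizedVal p F v) : v (-1) = 0 := by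
  have := val_mul hv (x := (-1 : F)) (y := -1) (by simp) (by simp)
  rw [neg_one_mul, neg_neg, val_one hv] at this; omega

theorem val_neg (hv : IsNormalizedVal p F v) {x : F} (hx : x ≠ 0) : v (-x) = v x := by
  rw [← neg_one_mul, val_mul hv (by simp) hx, val_neg_one hv, zero_add]

theorem VGe.neg (hv : IsNormalizedVal p F v) {m : ℤ} {x : F} (h : VGe v m x) : VGe v m (-x) := by
  intro hx
  have hx' : x ≠ 0 := by simpa using hx
  rw [val_neg hv hx']; exact h hx'

theorem VGe.add (hv : IsNormalizedVal p F v) {m : ℤ} {x y : F} (h : VGe v m x) (h' : VGe v m y) :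
    VGe v m (x + y) := by
  intro hxy
  by_cases hx : x = 0
  · subst hx; rw [zero_add] at hxy ⊢; exact h' hxy
  by_cases hy : y = 0
  · subst hy; rw [add_zero] at hxy ⊢; exact h hxy
  exact (le_min (h hx) (h' hy)).trans (hv.2.1 x y hx hy hxy)

theorem VGe.sub (hv : IsNormalizedVal p F v) {m : ℤ} {x y : F} (h : VGe v m x) (h' : VGe v m y) :
    VGe v m (x - y) := by rw [sub_eq_add_neg]; exact h.add hv (h'.neg hv)

theorem VGe.mul (hv : IsNormalizedVal p F v) {m k : ℤ} {x y : F} (h : VGe v m x)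
    (h' : VGe v k y) : VGe v (m + k) (x * y) := by
  intro hxy
  have hx := left_ne_zero_of_mul hxy
  have hy := right_ne_zero_of_mul hxy
  rw [val_mul hv hx hy]; exact add_le_add (h hx) (h' hy)

theorem VGe.pow (hv : IsNormalizedVal p F v) {m : ℤ} {x : F} (h : VGe v m x) (k : ℕ) :
    VGe v (k * m) (x ^ k) := by
  induction k with
  | zero => simpa using vge_of_eq (val_one hv)
  | succ k ih =>
    rw [pow_succ]; convert ih.mul hv h using 1; push_cast; ring

theorem VGe.sum (hv : IsNormalizedVal p F v) {m : ℤ} {ι : Type*} (s : Finset ι) (f : ι → F)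
    (h : ∀ i ∈ s, VGe v m (f i)) : VGe v m (∑ i ∈ s, f i) := by
  classical
  induction s using Finset.induction_on with
  | empty => exact vge_zero m
  | insert a s ha ih =>
    rw [Finset.sum_insert ha]
    exact (h a (by simp)).add hv (ih fun i hi => h i (by simp [hi]))

theorem vge_natCast (hv : IsNormalizedVal p F v) (k : ℕ) : VGe v 0 (k : F) := by
  induction k with
  | zero => simpa using vge_zero 0
  | succ k ih => rw [Nat.cast_succ]; exact ih.add hv (vge_of_eq (val_one hv))

theorem val_add (hv : IsNormalizedVal p F v) {m : ℤ} {x y : F} (hx : x ≠ 0) (hm : v x = m)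
    (hy : VGe v (m + 1) y) : x + y ≠ 0 ∧ v (x + y) = m := by
  have h0 : x + y ≠ 0 := by
    intro h
    have h2 : y = -x := by linear_combination h
    have := hy (by rw [h2]; simpa using hx)
    rw [h2, val_neg hv hx] at this; omega
  refine ⟨h0, ?_⟩
  have h1 : VGe v m (x + y) := (vge_of_eq hm).add hv (hy.mono (by omega))
  have h2 := h1 h0
  by_contra hne
  have h3 : VGe v (m + 1) (x + y) := fun _ => by omega
  have h4 := (h3.sub hv hy)
  rw [add_sub_cancel_right] at h4
  have := h4 hx; omega

/-- If the leading part is known, so is the valuation. -/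
theorem val_of_sub (hv : IsNormalizedVal p F v) {m : ℤ} {x y : F} (hx : x ≠ 0) (hm : v x = m)
    (hy : VGe v (m + 1) (y - x)) : y ≠ 0 ∧ v y = m := by
  have := val_add hv hx hm hy
  rwa [add_sub_cancel] at this

theorem val_choose (hv : IsNormalizedVal p F v) [hp : Fact p.Prime] {k : ℕ} (h1 : 1 ≤ k)
    (h2 : k < p) : VGe v (v (p : F)) ((p.choose k : ℕ) : F) := by
  obtain ⟨c, hc⟩ := hp.out.dvd_choose_self (by omega : k ≠ 0) h2
  rw [hc, Nat.cast_mul]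
  simpa using (vge_of_eq (v := v) (x := (p : F)) rfl).mul hv (vge_natCast hv c)

theorem exists_dom (hv : IsNormalizedVal p F v) {ι : Type*} [DecidableEq ι] (s : Finset ι)
    (f : ι → F)
    (hinj : ∀ i ∈ s, ∀ j ∈ s, f i ≠ 0 → f j ≠ 0 → v (f i) = v (f j) → i = j)
    (hne : ∃ i ∈ s, f i ≠ 0) :
    ∃ i ∈ s, f i ≠ 0 ∧ VGe v (v (f i) + 1) ((∑ j ∈ s, f j) - f i) ∧
      ∀ j ∈ s, VGe v (v (f i)) (f j) := by
  classical
  obtain ⟨i0, hi0, hfi0⟩ := hne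
  obtain ⟨i, hi, hmin⟩ := Finset.exists_min_image (s.filter fun i => f i ≠ 0) (fun i => v (f i))
    ⟨i0, by simp [hi0, hfi0]⟩
  rw [Finset.mem_filter] at hi
  refine ⟨i, hi.1, hi.2, ?_, fun j hj hfj => hmin j (by simp [hj, hfj])⟩
  rw [← Finset.add_sum_erase s f hi.1, add_sub_cancel_left]
  refine VGe.sum hv _ _ fun j hj hfj => ?_
  rw [Finset.mem_erase] at hj
  have h1 := hmin j (by simp [hj.2, hfj])
  have h2 : v (f i) ≠ v (f j) := fun h => hj.1 (hinj i hi.1 j hj.2 hi.2 hfj h).symm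
  omega

theorem vge_dom (hv : IsNormalizedVal p F v) {ι : Type*} [DecidableEq ι] (s : Finset ι)
    (f : ι → F)
    (hinj : ∀ i ∈ s, ∀ j ∈ s, f i ≠ 0 → f j ≠ 0 → v (f i) = v (f j) → i = j)
    {m : ℤ} (h : VGe v m (∑ j ∈ s, f j)) : ∀ j ∈ s, VGe v m (f j) := by
  intro j hj hfj
  obtain ⟨i, hi, hfi, h1, h2⟩ := exists_dom hv s f hinj ⟨j, hj, hfj⟩
  obtain ⟨h3, h4⟩ := val_of_sub hv hfi rfl h1
  have := h h3
  have := h2 j hj hfj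
  omega

theorem exists_val (hv : IsNormalizedVal p F v) (m : ℤ) : ∃ x : F, x ≠ 0 ∧ v x = m := by
  obtain ⟨π, h0, h1⟩ := hv.2.2.1
  rcases Int.eq_nat_or_neg m with ⟨k, rfl | rfl⟩
  · exact ⟨π ^ k, pow_ne_zero _ h0, by rw [val_pow hv h0, h1, mul_one]⟩
  · exact ⟨(π ^ k)⁻¹, inv_ne_zero (pow_ne_zero _ h0), by
      rw [val_inv hv (pow_ne_zero _ h0), val_pow hv h0, h1, mul_one]⟩

/-- The valuation of `ζ - 1`. -/
theorem val_zeta (hv : IsNormalizedVal p F v) [hp : Fact p.Prime] (hp0 : (p : F) ≠ 0) {ζ : F}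
    (hζ : IsPrimitiveRoot ζ p) :
    0 < v (ζ - 1) ∧ v (p : F) = ((p : ℤ) - 1) * v (ζ - 1) := by
  have hp2 := hp.out.two_le
  set l := ζ - 1 with hl
  have hl0 : l ≠ 0 := sub_ne_zero.mpr (hζ.ne_one hp.out.one_lt)
  have hpv := hv.2.2.2
  -- binomial expansion
  have hbin : ∑ k ∈ Finset.Ico 1 (p + 1), l ^ k * ((p.choose k : ℕ) : F) = 0 := by
    have h := add_pow l 1 p
    rw [hl, sub_add_cancel, hζ.pow_eq_one, Finset.range_eq_Ico,
      Finset.sum_eq_sum_Ico_succ_bot (by omega)] at h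
    simp only [one_pow, mul_one, pow_zero, Nat.choose_zero_right, Nat.cast_one, zero_add] at h
    rw [hl]
    linear_combination -h
  have hsplit : l ^ p + (∑ k ∈ Finset.Ico 2 p, l ^ k * ((p.choose k : ℕ) : F)) + l * p = 0 := by
    rw [Finset.sum_Ico_succ_top (by omega), Finset.sum_eq_sum_Ico_succ_bot (by omega)] at hbin
    simp only [pow_one, Nat.choose_one_right, Nat.choose_self, Nat.cast_one, mul_one] at hbin
    linear_combination hbin
  have hmid : ∀ m : ℤ, 0 ≤ m → VGe v m l →
      VGe v (2 * m + v (p : F)) (∑ k ∈ Finset.Ico 2 p, l ^ k * ((p.choose k : ℕ) : F)) := by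
    intro m hm hlm
    refine VGe.sum hv _ _ fun k hk => ?_
    rw [Finset.mem_Ico] at hk
    refine ((hlm.pow hv k).mul hv (val_choose hv (by omega) hk.2)).mono ?_
    have : (2 : ℤ) ≤ k := by exact_mod_cast hk.1
    nlinarith
  have hge0 : VGe v 0 l := by
    have hz : ζ ≠ 0 := hζ.ne_zero hp.out.ne_zero
    have h1 := val_pow hv hz p
    rw [hζ.pow_eq_one, val_one hv] at h1
    have : v ζ = 0 := by
      rcases mul_eq_zero.mp h1.symm with h | h
      · have : p = 0 := by exact_mod_cast h
        omega
      · exact h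
    exact (vge_of_eq this).sub hv (vge_of_eq (val_one hv))
  have hl0' := hge0 hl0
  have hpos : 0 < v l := by
    by_contra hcon
    have hvl : v l = 0 := by omega
    have h1 := (hmid 0 le_rfl hge0).add hv (hge0.mul hv (vge_of_eq (v := v) (x := (p : F)) rfl)|>.mono
      (by omega : 2 * 0 + v (p : F) ≤ 0 + v (p : F)))
    have h2 := val_add hv (pow_ne_zero p hl0) (val_pow hv hl0 p)
      (h1.mono (by rw [hvl]; simp; omega))
    apply h2.1
    rw [← hsplit]; ring
  refine ⟨hpos, ?_⟩
  have h1 := hmid (v l) hl0' (vge_of_eq rfl)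
  have h2 := val_add hv (x := l * p) (mul_ne_zero hl0 hp0) (val_mul hv hl0 hp0)
    (h1.mono (by omega))
  have h3 : l ^ p = -(l * p + ∑ k ∈ Finset.Ico 2 p, l ^ k * ((p.choose k : ℕ) : F)) := by
    linear_combination hsplit
  have h4 := val_pow hv hl0 p
  rw [h3, val_neg hv h2.1, h2.2] at h4
  linear_combination h4

end basics

section analytic
variable {p : ℕ} [hp : Fact p.Prime] {K : Type*} [Field K] [Algebra ℚ_[p] K] {v : K → ℤ}

theorem val_padic_unit_aux (hv : IsNormalizedVal p K v) (y : ℤ_[p]) (hy : ‖y - 1‖ < 1) :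
    v (algebraMap ℚ_[p] K y) = 0 := by
  have hy0 : y ≠ 0 := by
    rintro rfl
    simp at hy
  have hyK : algebraMap ℚ_[p] K y ≠ 0 := by
    simpa using hy0
  set V := v (algebraMap ℚ_[p] K y) with hV
  obtain ⟨m, hm⟩ : ∃ m : ℕ, m = p * V.natAbs + 1 := ⟨_, rfl⟩
  have hm1 : ‖((m : ℕ) : ℤ_[p])‖ = 1 := by
    rw [PadicInt.norm_natCast_eq_one_iff, hm]
    simp
  have hF : ‖(Polynomial.X ^ m - Polynomial.C y : Polynomial ℤ_[p]).aeval (1 : ℤ_[p])‖ <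
      ‖(Polynomial.X ^ m - Polynomial.C y : Polynomial ℤ_[p]).derivative.aeval (1 : ℤ_[p])‖ ^ 2 := by
    simp [Polynomial.derivative_X_pow, hm1]
    rwa [norm_sub_rev]
  obtain ⟨z, hz, -⟩ := hensels_lemma hF
  have hz' : z ^ m = y := by
    simpa [sub_eq_zero] using hz
  have hzK : algebraMap ℚ_[p] K z ≠ 0 := by
    have : z ≠ 0 := by rintro rfl; rw [zero_pow (by omega)] at hz'; exact hy0 hz'.symm
    simpa using this
  have h1 : V = m * v (algebraMap ℚ_[p] K z) := by
    rw [hV, ← hz', ← val_pow hv hzK]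
    congr 1
    rw [PadicInt.coe_pow, map_pow]
  by_contra hne
  have h2 : (m : ℤ) ∣ V := ⟨_, h1⟩
  have h3 := Nat.le_of_dvd (Int.natAbs_pos.mpr hne) (Int.natCast_dvd.mp h2)
  have := hp.out.pos
  nlinarith

theorem val_padic_unit (hv : IsNormalizedVal p K v) (y : ℤ_[p]) (hy : ‖y‖ = 1) :
    v (algebraMap ℚ_[p] K y) = 0 := by
  have hy0 : y ≠ 0 := by
    rintro rfl
    simp at hy
  have hyK : algebraMap ℚ_[p] K y ≠ 0 := by
    simpa using hy0
  have h1 : ‖y ^ (p - 1) - 1‖ < 1 := by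
    rw [← PadicInt.mem_nonunits]
    rw [← IsLocalRing.mem_maximalIdeal, ← PadicInt.ker_toZMod, RingHom.mem_ker]
    rw [map_sub, map_pow, map_one, sub_eq_zero]
    apply ZMod.pow_card_sub_one_eq_one
    intro h
    rw [← RingHom.mem_ker, PadicInt.ker_toZMod, IsLocalRing.mem_maximalIdeal,
      PadicInt.mem_nonunits] at h
    linarith
  have h2 := val_padic_unit_aux hv _ h1
  rw [PadicInt.coe_pow, map_pow, val_pow hv hyK] at h2
  rcases mul_eq_zero.mp h2 with h | h
  · have := hp.out.two_le
    have : p - 1 = 0 := by exact_mod_cast h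
    omega
  · exact h

theorem val_padic (hv : IsNormalizedVal p K v) (q : ℚ_[p]) (hq : q ≠ 0) :
    v (algebraMap ℚ_[p] K q) = v (p : K) * q.valuation := by
  have hpQ : (p : ℚ_[p]) ≠ 0 := by exact_mod_cast hp.out.ne_zero
  have hpK : (p : K) ≠ 0 := by
    have := (map_ne_zero (algebraMap ℚ_[p] K)).mpr hpQ
    simpa using this
  have hz : ∀ k : ℤ, v ((p : K) ^ k) = v (p : K) * k := by
    intro k
    rcases Int.eq_nat_or_neg k with ⟨j, rfl | rfl⟩
    · rw [zpow_natCast, val_pow hv hpK]; ring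
    · rw [zpow_neg, zpow_natCast, val_inv hv (pow_ne_zero _ hpK), val_pow hv hpK]; ring
  set w := q * (p : ℚ_[p]) ^ (-q.valuation) with hw
  have hw1 : ‖w‖ = 1 := by
    have hpR : (p : ℝ) ≠ 0 := by exact_mod_cast hp.out.ne_zero
    rw [hw, norm_mul, Padic.norm_eq_zpow_neg_valuation hq, norm_zpow, Padic.norm_p]
    rw [inv_zpow, zpow_neg, inv_inv]
    exact inv_mul_cancel₀ (zpow_ne_zero _ hpR)
  have h1 := val_padic_unit hv (⟨w, hw1.le⟩ : ℤ_[p]) hw1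
  change v (algebraMap ℚ_[p] K w) = 0 at h1
  have h2 : algebraMap ℚ_[p] K q ≠ 0 := by simpa using hq
  rw [hw, map_mul, map_zpow₀, map_natCast, val_mul hv h2 (zpow_ne_zero _ hpK), hz] at h1
  linarith

variable [FiniteDimensional ℚ_[p] K]

theorem analytic_facts (hv : IsNormalizedVal p K v) :
    (∃ S : Finset K, (∀ s ∈ S, VGe v 0 s) ∧ ∀ c, VGe v 0 c → ∃ s ∈ S, VGe v 1 (c - s)) ∧
    (∀ z : K, (∀ N : ℕ, ∃ c, VGe v 0 c ∧ VGe v N (c ^ p - z)) → ∃ c : K, c ^ p = z) := by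
  classical
  have he := hv.2.2.2
  set e := v (p : K) with hedef
  have hp1 : (1 : ℝ) < p := by exact_mod_cast hp.out.one_lt
  obtain ⟨r, hr0, hr1, hre⟩ : ∃ r : ℝ, 0 < r ∧ r < 1 ∧ r ^ e = (p : ℝ)⁻¹ := by
    refine ⟨(p : ℝ) ^ (-(1 / (e : ℝ))), by positivity, ?_, ?_⟩
    · apply Real.rpow_lt_one_of_one_lt_of_neg hp1
      have : (0 : ℝ) < e := by exact_mod_cast he
      simpa using this
    · have : (e : ℝ) ≠ 0 := by exact_mod_cast he.ne'
      rw [← Real.rpow_intCast, ← Real.rpow_mul (by positivity), neg_mul, one_div,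
        inv_mul_cancel₀ this, Real.rpow_neg_one]
  let A : AbsoluteValue K ℝ :=
    { toFun := fun x => if x = 0 then 0 else r ^ (v x)
      map_mul' := by
        intro x y
        by_cases hx : x = 0
        · simp [hx]
        by_cases hy : y = 0
        · simp [hy]
        simp [hx, hy, val_mul hv hx hy, zpow_add₀ hr0.ne']
      nonneg' := by
        intro x
        split_ifs
        · exact le_rfl
        · positivity
      eq_zero' := by
        intro x
        by_cases hx : x = 0
        · simp [hx]
        · simp [hx, zpow_ne_zero _ hr0.ne']
      add_le' := by
        intro x y
        by_cases hx : x = 0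
        · simp [hx]
        by_cases hy : y = 0
        · simp [hy]
        by_cases hxy : x + y = 0
        · simp [hxy, hx, hy]; positivity
        simp only [hx, hy, hxy, if_false]
        have h := hv.2.1 x y hx hy hxy
        have h1 : 0 < r ^ v x := by positivity
        have h2 : 0 < r ^ v y := by positivity
        rcases min_le_iff.mp h with h | h
        · have := zpow_le_zpow_right_of_le_one₀ hr0 hr1.le h
          linarith
        · have := zpow_le_zpow_right_of_le_one₀ hr0 hr1.le h
          linarith }
  have hA : ∀ x : K, x ≠ 0 → A x = r ^ v x := fun x hx => if_neg hx
  let _ : NormedField K := A.toNormedField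
  have hnorm : ∀ x : K, ‖x‖ = A x := fun x => rfl
  let _ : NormedSpace ℚ_[p] K :=
    { norm_smul_le := by
        intro q x
        by_cases hq : q = 0
        · simp [hq]
        rw [Algebra.smul_def, norm_mul]
        refine mul_le_mul_of_nonneg_right ?_ (norm_nonneg _)
        have hqK : algebraMap ℚ_[p] K q ≠ 0 := by simpa using hq
        rw [hnorm, hA _ hqK, val_padic hv q hq, zpow_mul, hre,
          Padic.norm_eq_zpow_neg_valuation hq, inv_zpow, zpow_neg] }
  have _ : ProperSpace K := FiniteDimensional.proper ℚ_[p] K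
  have hle : ∀ (m : ℤ) (x : K), ‖x‖ ≤ r ^ m ↔ VGe v m x := by
    intro m x
    by_cases hx : x = 0
    · subst hx
      simp only [norm_zero]
      exact ⟨fun _ => vge_zero m, fun _ => by positivity⟩
    rw [hnorm, hA x hx, zpow_le_zpow_iff_right_of_lt_one₀ hr0 hr1]
    exact ⟨fun h _ => h, fun h => h hx⟩
  have hcpt : IsCompact (Metric.closedBall (0 : K) 1) := isCompact_closedBall 0 1
  have hmem : ∀ x : K, x ∈ Metric.closedBall (0 : K) 1 ↔ VGe v 0 x := by
    intro x
    rw [mem_closedBall_zero_iff, ← hle 0, zpow_zero]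
  constructor
  · obtain ⟨t, hts, htf, hcov⟩ := hcpt.finite_cover_balls (e := 1) one_pos
    refine ⟨htf.toFinset, fun s hs => (hmem s).mp (hts (by simpa using hs)), fun c hc => ?_⟩
    have := hcov ((hmem c).mpr hc)
    simp only [Set.mem_iUnion, exists_prop] at this
    obtain ⟨s, hs, hcs⟩ := this
    refine ⟨s, by simpa using hs, fun h0 => ?_⟩
    rw [mem_ball_iff_norm, hnorm, hA _ h0] at hcs
    by_contra hlt
    have : r ^ (0 : ℤ) ≤ r ^ v (c - s) :=
      zpow_le_zpow_right_of_le_one₀ hr0 hr1.le (by omega)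
    simp at this
    linarith
  · intro z hz
    have hcl : IsClosed ((fun c : K => c ^ p) '' Metric.closedBall (0 : K) 1) :=
      (hcpt.image (by fun_prop)).isClosed
    have : z ∈ closure ((fun c : K => c ^ p) '' Metric.closedBall (0 : K) 1) := by
      rw [Metric.mem_closure_iff]
      intro ε hε
      obtain ⟨N, hN⟩ := exists_pow_lt_of_lt_one hε hr1
      obtain ⟨c, hc, hcz⟩ := hz N
      refine ⟨c ^ p, ⟨c, (hmem c).mpr hc, rfl⟩, ?_⟩
      rw [dist_eq_norm, norm_sub_rev]
      refine lt_of_le_of_lt ((hle N _).mpr hcz) ?_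
      simpa using hN
    rw [hcl.closure_eq] at this
    obtain ⟨c, -, hc⟩ := this
    exact ⟨c, hc⟩

end analytic

section kfacts
variable {p : ℕ} [hp : Fact p.Prime] {F : Type*} [Field F] {v : F → ℤ}

theorem binom1 (p : ℕ) [hp : Fact p.Prime] {R : Type*} [CommRing R] (f : R) :
    (1 + f) ^ p = 1 + ∑ k ∈ Finset.Ico 1 (p + 1), f ^ k * ((p.choose k : ℕ) : R) := by
  have h := add_pow f 1 p
  rw [Finset.range_eq_Ico, Finset.sum_eq_sum_Ico_succ_bot (by omega)] at h
  simp only [one_pow, mul_one, pow_zero, Nat.choose_zero_right, Nat.cast_one, zero_add] at h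
  rw [add_comm 1 f]
  exact h

theorem binom2 (p : ℕ) [hp : Fact p.Prime] {R : Type*} [CommRing R] (f : R) :
    (1 + f) ^ p = 1 + p * f + (∑ k ∈ Finset.Ico 2 p, f ^ k * ((p.choose k : ℕ) : R)) + f ^ p := by
  have hp2 := hp.out.two_le
  rw [binom1, Finset.sum_Ico_succ_top (by omega), Finset.sum_eq_sum_Ico_succ_bot (by omega)]
  simp only [pow_one, Nat.choose_one_right, Nat.choose_self, Nat.cast_one, mul_one]
  ring

theorem vge_unit {x : F} (hv : IsNormalizedVal p F v) (h : VGe v 1 (x - 1)) : x ≠ 0 ∧ v x = 0 :=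
  val_of_sub hv one_ne_zero (val_one hv) (by simpa using h)

theorem VGe.div (hv : IsNormalizedVal p F v) {m k : ℤ} {x y : F} (h : VGe v m x) (hy : y ≠ 0)
    (hk : v y = k) : VGe v (m - k) (x / y) := by
  rw [div_eq_mul_inv, sub_eq_add_neg]
  exact h.mul hv (vge_of_eq (by rw [val_inv hv hy, hk]))

theorem pth_power (hv : IsNormalizedVal p F v) (hp0 : (p : F) ≠ 0) {s : ℤ} (hs : 0 < s)
    (hps : v (p : F) = ((p : ℤ) - 1) * s)
    (hcomp : ∀ z : F, (∀ N : ℕ, ∃ c, VGe v 0 c ∧ VGe v N (c ^ p - z)) → ∃ c : F, c ^ p = z)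
    {w : F} (hw : VGe v (p * s + 1) w) : ∃ c : F, c ^ p = 1 + w := by
  have hp2 : (2 : ℤ) ≤ p := by exact_mod_cast hp.out.two_le
  have key : ∀ N : ℕ, ∃ c : F, VGe v 1 (c - 1) ∧ VGe v (p * s + 1 + N) (c ^ p - (1 + w)) := by
    intro N
    induction N with
    | zero =>
      refine ⟨1, by simpa using vge_zero 1, ?_⟩
      have : (1 : F) ^ p - (1 + w) = - w := by simp
      rw [this]
      simpa using hw.neg hv
    | succ N ih =>
      obtain ⟨c, hc1, hc⟩ := ih
      obtain ⟨hc0, hvc⟩ := vge_unit hv hc1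
      have hcp0 := pow_ne_zero p hc0
      have hvcp : v (c ^ p) = 0 := by rw [val_pow hv hc0, hvc, mul_zero]
      set d := (1 + w - c ^ p) / c ^ p with hd
      have hdg : VGe v (p * s + 1 + N) d := by
        have h1 := (hc.neg hv).div hv hcp0 hvcp
        rw [neg_sub, sub_zero] at h1
        exact h1
      set f := d / p with hf
      have hfg : VGe v (s + 1 + N) f := by
        refine (hdg.div hv hp0 hps).mono ?_
        apply le_of_eq; ring
      refine ⟨c * (1 + f), ?_, ?_⟩
      · have : c * (1 + f) - 1 = (c - 1) + c * f := by ring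
        rw [this]
        refine hc1.add hv (((vge_of_eq hvc).mul hv hfg).mono ?_)
        omega
      · have h1 : (c * (1 + f)) ^ p - (1 + w) =
            c ^ p * ((∑ k ∈ Finset.Ico 2 p, f ^ k * ((p.choose k : ℕ) : F)) + f ^ p) := by
          rw [mul_pow, binom2]
          have h2 : (p : F) * f = d := by rw [hf]; field_simp
          have h3 : c ^ p * d = 1 + w - c ^ p := by rw [hd]; field_simp
          rw [h2]
          linear_combination h3
        rw [h1]
        have hN : (0 : ℤ) ≤ N := Nat.cast_nonneg N
        refine ((vge_of_eq hvcp).mul hv (VGe.add hv (m := p * s + 1 + (N + 1)) ?_ ?_)).mono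
          (by push_cast; omega)
        · refine VGe.sum hv _ _ fun k hk => ?_
          rw [Finset.mem_Ico] at hk
          refine ((hfg.pow hv k).mul hv (val_choose hv (by omega) hk.2)).mono ?_
          have hk2 : (2 : ℤ) ≤ k := by exact_mod_cast hk.1
          rw [hps]
          nlinarith [mul_nonneg (by omega : 0 ≤ (k : ℤ) - 2) (by omega : 0 ≤ s + 1 + (N : ℤ))]
        · refine (hfg.pow hv p).mono ?_
          nlinarith [mul_nonneg (by omega : 0 ≤ (p : ℤ) - 2) (by omega : 0 ≤ 1 + (N : ℤ))]
  apply hcomp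
  intro N
  obtain ⟨c, hc1, hc⟩ := key N
  refine ⟨c, vge_of_eq (vge_unit hv hc1).2, hc.mono ?_⟩
  nlinarith

theorem coef_ge (hv : IsNormalizedVal p F v) {l : F} {s : ℤ} (hs : 0 < s) (hl : v l = s)
    (hps : v (p : F) = ((p : ℤ) - 1) * s) {k : ℕ} (h1 : 1 ≤ k) (h2 : k < p + 1) :
    VGe v (p * s) (l ^ k * ((p.choose k : ℕ) : F)) := by
  have hlg : VGe v s l := vge_of_eq hl
  have hk1 : (1 : ℤ) ≤ k := by exact_mod_cast h1
  rcases Nat.lt_succ_iff_lt_or_eq.mp h2 with h | h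
  · refine ((hlg.pow hv k).mul hv (val_choose hv h1 h)).mono ?_
    rw [hps]; nlinarith
  · subst h
    simpa using hlg.pow hv k

theorem vge_pow_sub (hv : IsNormalizedVal p F v) {c c' : F} (hc : VGe v 0 c) (hc' : VGe v 0 c')
    {m : ℤ} (h : VGe v m (c - c')) (k : ℕ) : VGe v m (c ^ k - c' ^ k) := by
  induction k with
  | zero => simpa using vge_zero m
  | succ k ih =>
    have : c ^ (k + 1) - c' ^ (k + 1) = c ^ k * (c - c') + (c ^ k - c' ^ k) * c' := by ring
    rw [this]
    refine VGe.add hv ?_ ?_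
    · simpa using (hc.pow hv k).mul hv h
    · simpa using ih.mul hv hc'

theorem exists_beta (hv : IsNormalizedVal p F v) {ζ : F}
    (hζ : IsPrimitiveRoot ζ p) {s : ℤ} (hs : 0 < s) (hl : v (ζ - 1) = s)
    (hps : v (p : F) = ((p : ℤ) - 1) * s)
    (hfin : ∃ S : Finset F, (∀ s ∈ S, VGe v 0 s) ∧ ∀ c, VGe v 0 c → ∃ s ∈ S, VGe v 1 (c - s)) :
    ∃ w : F, VGe v (p * s) w ∧
      ∀ c, VGe v 0 c → ¬ VGe v (p * s + 1) (1 + w - (1 + (ζ - 1) * c) ^ p) := by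
  by_contra! hcon
  set l := ζ - 1 with hldef
  have hl0 : l ≠ 0 := sub_ne_zero.mpr (hζ.ne_one hp.out.one_lt)
  have hlp0 := pow_ne_zero p hl0
  have hlp : v (l ^ p) = p * s := by rw [val_pow hv hl0, hl]
  let φ : F → F := fun c => ((1 + l * c) ^ p - 1) / l ^ p
  have hφ : ∀ c, (1 + l * c) ^ p - 1 =
      ∑ k ∈ Finset.Ico 1 (p + 1), (l ^ k * ((p.choose k : ℕ) : F)) * c ^ k := by
    intro c
    rw [binom1, add_sub_cancel_left]
    refine Finset.sum_congr rfl fun k _ => by ring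
  have hφ0 : ∀ c, VGe v 0 c → VGe v 0 (φ c) := by
    intro c hc
    have h1 : VGe v (p * s) ((1 + l * c) ^ p - 1) := by
      rw [hφ]
      refine VGe.sum hv _ _ fun k hk => ?_
      rw [Finset.mem_Ico] at hk
      simpa using (coef_ge hv hs hl hps hk.1 hk.2).mul hv (hc.pow hv k)
    simpa using h1.div hv hlp0 hlp
  have hφ1 : ∀ c c', VGe v 0 c → VGe v 0 c' → VGe v 1 (c - c') → VGe v 1 (φ c - φ c') := by
    intro c c' hc hc' hcc
    have h1 : VGe v (p * s + 1) (((1 + l * c) ^ p - 1) - ((1 + l * c') ^ p - 1)) := by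
      rw [hφ, hφ, ← Finset.sum_sub_distrib]
      refine VGe.sum hv _ _ fun k hk => ?_
      rw [Finset.mem_Ico] at hk
      rw [← mul_sub]
      exact (coef_ge hv hs hl hps hk.1 hk.2).mul hv (vge_pow_sub hv hc hc' hcc k)
    have h2 := h1.div hv hlp0 hlp
    rw [sub_div] at h2
    exact h2.mono (by omega)
  let O := {c : F // VGe v 0 c}
  let st : Setoid O :=
    { r := fun a b => VGe v 1 (a.1 - b.1)
      iseqv :=
        ⟨fun a => by simpa using vge_zero 1,
         fun {a b} h => by simpa using h.neg hv,
         fun {a b c} h h' => by simpa using h.add hv h'⟩ }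
  let g : Quotient st → Quotient st :=
    Quotient.map (fun a : O => (⟨φ a.1, hφ0 a.1 a.2⟩ : O)) (fun a b h => hφ1 a.1 b.1 a.2 b.2 h)
  have hfinQ : Finite (Quotient st) := by
    obtain ⟨S, hS, hcov⟩ := hfin
    refine Finite.of_surjective
      (fun a : {x // x ∈ S} => (Quotient.mk st ⟨a.1, hS a.1 a.2⟩ : Quotient st)) ?_
    intro q
    induction q using Quotient.inductionOn with
    | h a =>
      obtain ⟨x, hx, hax⟩ := hcov a.1 a.2
      refine ⟨⟨x, hx⟩, Quotient.sound (s := st) ?_⟩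
      exact st.iseqv.symm hax
  have hsurj : Function.Surjective g := by
    intro q
    induction q using Quotient.inductionOn with
    | h a =>
      obtain ⟨c, hc, hcc⟩ := hcon (l ^ p * a.1) (by
        simpa using (vge_of_eq hlp).mul hv a.2)
      refine ⟨Quotient.mk st ⟨c, hc⟩, Quotient.sound (s := st) ?_⟩
      change VGe v 1 (φ c - a.1)
      have h1 := ((hcc.div hv hlp0 hlp).neg hv).mono (by omega : (1 : ℤ) ≤ p * s + 1 - p * s)
      convert h1 using 1
      simp only [φ]
      field_simp
      ring
  have hinj := Finite.injective_iff_surjective.mpr hsurj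
  have hone : VGe v 0 (1 : F) := vge_of_eq (val_one hv)
  have h01 : g (Quotient.mk st ⟨0, vge_zero 0⟩) = g (Quotient.mk st ⟨1, hone⟩) := by
    refine Quotient.sound (s := st) ?_
    change VGe v 1 (φ 0 - φ 1)
    have : φ 0 - φ 1 = 0 := by
      simp [φ, hldef, hζ.pow_eq_one]
    rw [this]; exact vge_zero 1
  have h2 := Quotient.exact (s := st) (hinj h01)
  change VGe v 1 ((0 : F) - 1) at h2
  have h3 := h2 (by simp)
  rw [zero_sub, val_neg_one hv] at h3
  omega

end kfacts

section ext
variable {p : ℕ} {K : Type*} [Field K] {vK : K → ℤ} {L : Type*} [Field L] [Algebra K L] {vL : L → ℤ}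

theorem ext_inj (hvL : IsNormalizedVal p L vL) {e : ℤ}
    (hext : ∀ x : K, x ≠ 0 → vL (algebraMap K L x) = e * vK x) {m : ℕ} (f : Fin m → L)
    (hf0 : ∀ i, f i ≠ 0) (hf : ∀ i j, e ∣ vL (f i) - vL (f j) → i = j) (c : Fin m → K) :
    ∀ i ∈ Finset.univ, ∀ j ∈ Finset.univ, algebraMap K L (c i) * f i ≠ 0 →
      algebraMap K L (c j) * f j ≠ 0 →
      vL (algebraMap K L (c i) * f i) = vL (algebraMap K L (c j) * f j) → i = j := by
  intro i _ j _ hi hj h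
  have hi' := left_ne_zero_of_mul hi
  have hj' := left_ne_zero_of_mul hj
  rw [val_mul hvL hi' (hf0 i), val_mul hvL hj' (hf0 j), hext _ (by simpa using hi'),
    hext _ (by simpa using hj')] at h
  exact hf i j ⟨vK (c j) - vK (c i), by linear_combination h⟩

theorem ext_indep (hvL : IsNormalizedVal p L vL) {e : ℤ}
    (hext : ∀ x : K, x ≠ 0 → vL (algebraMap K L x) = e * vK x) {m : ℕ} (f : Fin m → L)
    (hf0 : ∀ i, f i ≠ 0) (hf : ∀ i j, e ∣ vL (f i) - vL (f j) → i = j) :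
    LinearIndependent K f := by
  rw [Fintype.linearIndependent_iff]
  intro c hc i
  by_contra hci
  simp only [Algebra.smul_def] at hc
  obtain ⟨j, -, hj0, hj, -⟩ := exists_dom hvL Finset.univ (fun i => algebraMap K L (c i) * f i)
    (ext_inj hvL hext f hf0 hf c) ⟨i, Finset.mem_univ i, mul_ne_zero (by simpa using hci) (hf0 i)⟩
  exact (val_of_sub hvL hj0 rfl hj).1 hc

theorem ramify [hp : Fact p.Prime] (hvL : IsNormalizedVal p L vL) {s : ℤ} (hs : 0 < s)
    (hps : vK (p : K) = ((p : ℤ) - 1) * s) (hp0 : (p : K) ≠ 0)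
    {a κ : K} {n : ℕ} (ha0 : a ≠ 0) (ha : vK a = n) (hnp : ¬ (p ∣ n)) (hns : (n : ℤ) < p * s)
    (hκ : κ = 1 + a) {θ : L} (hθ : θ ^ p = algebraMap K L κ)
    (hLθ : IntermediateField.adjoin K {θ} = ⊤) {e : ℤ} (he : 0 < e)
    (hext : ∀ x : K, x ≠ 0 → vL (algebraMap K L x) = e * vK x) :
    FiniteDimensional K L ∧ Module.finrank K L = p ∧ e = p ∧ θ - 1 ≠ 0 ∧ vL (θ - 1) = n := by
  have hp2 : (2 : ℤ) ≤ p := by exact_mod_cast hp.out.two_le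
  have hint : IsIntegral K θ := by
    refine ⟨Polynomial.X ^ p - Polynomial.C κ, Polynomial.monic_X_pow_sub_C _ hp.out.ne_zero, ?_⟩
    simp [hθ]
  have hfd : FiniteDimensional K L := by
    have h1 := IntermediateField.adjoin.finiteDimensional hint
    rw [hLθ] at h1
    exact IntermediateField.topEquiv.toLinearEquiv.finiteDimensional
  have hfr : Module.finrank K L ≤ p := by
    have h1 := IntermediateField.adjoin.finrank hint
    rw [hLθ, IntermediateField.finrank_top'] at h1
    rw [h1]
    have h2 : minpoly K θ ∣ Polynomial.X ^ p - Polynomial.C κ := minpoly.dvd _ _ (by simp [hθ])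
    have h3 := Polynomial.natDegree_le_of_dvd h2
      (Polynomial.X_pow_sub_C_ne_zero hp.out.pos κ)
    rwa [Polynomial.natDegree_X_pow_sub_C] at h3
  set y := θ - 1 with hy
  have haL : algebraMap K L a ≠ 0 := by simpa using ha0
  have hbin : y ^ p + ∑ k ∈ Finset.Ico 1 p, y ^ k * ((p.choose k : ℕ) : L) = algebraMap K L a := by
    have h := binom1 p y
    rw [Finset.sum_Ico_succ_top (by have := hp.out.pos; omega)] at h
    simp only [Nat.choose_self, Nat.cast_one, mul_one] at h
    have h2 : 1 + y = θ := by rw [hy]; ring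
    rw [h2, hθ, hκ, map_add, map_one] at h
    linear_combination -h
  have hy0 : y ≠ 0 := by
    intro h0
    have h1 : ∑ k ∈ Finset.Ico 1 p, (0 : L) ^ k * ((p.choose k : ℕ) : L) = 0 := by
      refine Finset.sum_eq_zero fun k hk => ?_
      rw [Finset.mem_Ico] at hk
      rw [zero_pow (by omega), zero_mul]
    rw [h0, zero_pow hp.out.ne_zero, h1, add_zero] at hbin
    exact haL hbin.symm
  have hpL : vL (p : L) = e * (((p : ℤ) - 1) * s) := by
    have := hext (p : K) hp0
    rwa [map_natCast, hps] at this
  set m := vL y with hm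
  have hvy : vL (y ^ p) = p * m := val_pow hvL hy0 p
  have hyg : VGe vL m y := vge_of_eq rfl
  have hva := hext a ha0
  rw [ha] at hva
  have hes : 0 < e * s := mul_pos he hs
  have hlt : m < e * s := by
    by_contra! hge
    have h1 : VGe vL (p * (e * s)) (algebraMap K L a) := by
      rw [← hbin]
      refine ((vge_of_eq hvy).mono ?_).add hvL (VGe.sum hvL _ _ fun k hk => ?_)
      · nlinarith
      · rw [Finset.mem_Ico] at hk
        refine ((hyg.pow hvL k).mul hvL (val_choose hvL hk.1 hk.2)).mono ?_
        have : (1 : ℤ) ≤ k := by exact_mod_cast hk.1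
        rw [hpL]
        nlinarith
    have h2 := h1 haL
    rw [hva] at h2
    nlinarith
  have hpm : p * m = e * n := by
    have h1 : VGe vL (p * m + 1) (∑ k ∈ Finset.Ico 1 p, y ^ k * ((p.choose k : ℕ) : L)) := by
      refine VGe.sum hvL _ _ fun k hk => ?_
      rw [Finset.mem_Ico] at hk
      refine ((hyg.pow hvL k).mul hvL (val_choose hvL hk.1 hk.2)).mono ?_
      have h1 : (1 : ℤ) ≤ k := by exact_mod_cast hk.1
      have h2 : (k : ℤ) + 1 ≤ p := by exact_mod_cast hk.2
      rw [hpL]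
      rcases le_or_gt m 0 with h | h
      · nlinarith
      · nlinarith
    have h2 := val_add hvL (pow_ne_zero p hy0) hvy h1
    rw [hbin, hva] at h2
    exact h2.2.symm
  have hpe : (p : ℤ) ∣ e := by
    have h1 : (p : ℤ) ∣ e * n := ⟨m, hpm.symm⟩
    rcases (Nat.prime_iff_prime_int.mp hp.out).dvd_or_dvd h1 with h | h
    · exact h
    · exact absurd (by exact_mod_cast h) hnp
  have hple := Int.le_of_dvd he hpe
  have hle : e ≤ Module.finrank K L := by
    obtain ⟨P, hP0, hP⟩ := hvL.2.2.1
    have h1 := ext_indep hvL hext (m := e.toNat) (fun i => P ^ (i : ℕ))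
      (fun i => pow_ne_zero _ hP0) (by
        intro i j h
        rw [val_pow hvL hP0, val_pow hvL hP0, hP] at h
        have hi := i.2
        have hj := j.2
        have h3 : ((i : ℕ) : ℤ) * 1 - ((j : ℕ) : ℤ) * 1 = 0 := by
          apply Int.eq_zero_of_abs_lt_dvd h
          rw [abs_lt]
          omega
        ext
        omega)
    have h2 := h1.fintype_card_le_finrank
    rw [Fintype.card_fin] at h2
    omega
  have hep : e = p := by omega
  refine ⟨hfd, by omega, hep, hy0, ?_⟩
  rw [hep] at hpm
  exact mul_left_cancel₀ (by omega) hpm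

/-- expansion in powers of `y` -/
theorem expand [hp : Fact p.Prime] (hvL : IsNormalizedVal p L vL) [FiniteDimensional K L]
    (hfr : Module.finrank K L = p)
    (hext : ∀ x : K, x ≠ 0 → vL (algebraMap K L x) = (p : ℤ) * vK x)
    {n : ℕ} (hnp : ¬ (p ∣ n)) {y : L} (hy0 : y ≠ 0) (hy : vL y = n) (z : L) :
    ∃ c : Fin p → K, z = ∑ i : Fin p, algebraMap K L (c i) * y ^ (i : ℕ) ∧
      ∀ i ∈ Finset.univ, ∀ j ∈ Finset.univ, algebraMap K L (c i) * y ^ (i : ℕ) ≠ 0 →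
      algebraMap K L (c j) * y ^ (j : ℕ) ≠ 0 →
      vL (algebraMap K L (c i) * y ^ (i : ℕ)) = vL (algebraMap K L (c j) * y ^ (j : ℕ)) →
      i = j := by
  have hf0 : ∀ i : Fin p, y ^ (i : ℕ) ≠ 0 := fun i => pow_ne_zero _ hy0
  have hf : ∀ i j : Fin p, (p : ℤ) ∣ vL (y ^ (i : ℕ)) - vL (y ^ (j : ℕ)) → i = j := by
    intro i j h
    rw [val_pow hvL hy0, val_pow hvL hy0, hy, ← sub_mul] at h
    have hi := i.2
    have hj := j.2
    rcases (Nat.prime_iff_prime_int.mp hp.out).dvd_or_dvd h with h | h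
    · have h3 : ((i : ℕ) : ℤ) - ((j : ℕ) : ℤ) = 0 := by
        apply Int.eq_zero_of_abs_lt_dvd h
        rw [abs_lt]
        omega
      ext
      omega
    · exact absurd (by exact_mod_cast h) hnp
  have hind := ext_indep hvL hext (fun i : Fin p => y ^ (i : ℕ)) hf0 hf
  have hspan := hind.span_eq_top_of_card_eq_finrank' (by rw [Fintype.card_fin, hfr])
  have hz : z ∈ Submodule.span K (Set.range fun i : Fin p => y ^ (i : ℕ)) := by
    rw [hspan]; trivial
  obtain ⟨c, hc⟩ := (Submodule.mem_span_range_iff_exists_fun K).mp hz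
  refine ⟨c, ?_, ext_inj hvL hext _ hf0 hf c⟩
  rw [← hc]
  simp only [Algebra.smul_def]

/-- residue fields agree -/
theorem residue_eq [hp : Fact p.Prime] (hvK : IsNormalizedVal p K vK)
    (hvL : IsNormalizedVal p L vL) [FiniteDimensional K L]
    (hfr : Module.finrank K L = p)
    (hext : ∀ x : K, x ≠ 0 → vL (algebraMap K L x) = (p : ℤ) * vK x)
    {n : ℕ} (hnp : ¬ (p ∣ n)) {y : L} (hy0 : y ≠ 0) (hy : vL y = n) {z z' : L}
    (hz0 : z ≠ 0) {m : ℤ} (hz : vL z = m) (hz' : VGe vL m z') :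
    ∃ c : K, VGe vK 0 c ∧ VGe vL (m + 1) (z' - algebraMap K L c * z) := by
  classical
  by_cases h0 : z' / z = 0
  · refine ⟨0, vge_zero 0, ?_⟩
    have : z' = 0 := by
      rcases div_eq_zero_iff.mp h0 with h | h
      · exact h
      · exact absurd h hz0
    simpa [this] using vge_zero (m + 1)
  have hq : VGe vL 0 (z' / z) := by simpa using hz'.div hvL hz0 hz
  obtain ⟨c, hc, hinj⟩ := expand hvL hfr hext hnp hy0 hy (z' / z)
  have hge := vge_dom hvL Finset.univ _ hinj (m := 0) (by rw [← hc]; exact hq)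
  let i0 : Fin p := ⟨0, hp.out.pos⟩
  have hge0 := hge i0 (Finset.mem_univ _)
  have hpp : (0 : ℤ) < p := by exact_mod_cast hp.out.pos
  refine ⟨c i0, ?_, ?_⟩
  · intro hne
    have h1 := hge0 (by simpa [i0] using hne)
    simp only [i0, pow_zero, mul_one] at h1
    rw [hext _ hne] at h1
    exact nonneg_of_mul_nonneg_right h1 hpp
  · have h1 : VGe vL 1 (z' / z - algebraMap K L (c i0)) := by
      rw [hc, ← Finset.add_sum_erase _ _ (Finset.mem_univ i0)]
      simp only [i0, pow_zero, mul_one, add_sub_cancel_left]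
      refine VGe.sum hvL _ _ fun j hj hjne => ?_
      have hj0 : (j : ℕ) ≠ 0 := by
        intro h
        have := (Finset.mem_erase.mp hj).1
        apply this
        ext
        simpa using h
      have h2 := hge j (Finset.mem_univ _) hjne
      by_contra hlt
      have h3 : vL (algebraMap K L (c j) * y ^ (j : ℕ)) = 0 := by omega
      have hcj := left_ne_zero_of_mul hjne
      rw [val_mul hvL hcj (pow_ne_zero _ hy0), hext _ (by simpa using hcj), val_pow hvL hy0,
        hy] at h3
      have h4 : (p : ℤ) ∣ ((j : ℕ) : ℤ) * n := ⟨-vK (c j), by linear_combination h3⟩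
      have h5 : p ∣ (j : ℕ) * n := by exact_mod_cast h4
      rcases hp.out.dvd_mul.mp h5 with h | h
      · have := Nat.le_of_dvd (by omega) h
        have := j.2
        omega
      · exact hnp h
    have h2 := h1.mul hvL (vge_of_eq hz)
    rw [sub_mul, div_mul_cancel₀ _ hz0] at h2
    exact h2.mono (by omega)

end ext

section core
variable {p : ℕ} [hp : Fact p.Prime] {K : Type*} [Field K] {vK : K → ℤ} {L : Type*} [Field L]
  [Algebra K L] {vL : L → ℤ}

theorem vge_ext (hext : ∀ x : K, x ≠ 0 → vL (algebraMap K L x) = (p : ℤ) * vK x) {m : ℤ} {x : K}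
    (h : VGe vK m x) : VGe vL (p * m) (algebraMap K L x) := by
  intro hx
  have hx' : x ≠ 0 := by simpa using hx
  rw [hext x hx']
  exact mul_le_mul_of_nonneg_left (h hx') (by positivity)

theorem core_step (hvK : IsNormalizedVal p K vK) (hvL : IsNormalizedVal p L vL)
    (hext : ∀ x : K, x ≠ 0 → vL (algebraMap K L x) = (p : ℤ) * vK x)
    (hres : ∀ (z z' : L) (m : ℤ), z ≠ 0 → vL z = m → VGe vL m z' →
      ∃ c : K, VGe vK 0 c ∧ VGe vL (m + 1) (z' - algebraMap K L c * z))
    {n : ℕ} (hnp : ¬ p ∣ n) {s : ℤ} (hs : 0 < s)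
    {l ζ : K} (hl0 : l ≠ 0) (hl : vK l = s) (hζ0 : ζ ≠ 0) (hζ : vK ζ = 0)
    (hpL : vL (p : L) = p * (((p : ℤ) - 1) * s))
    (D : Module.End K L) (Y : L → L) (hY : ∀ z, z ≠ 0 → Y z ≠ 0 ∧ vL (Y z) = vL z + n)
    (hDY : ∀ z, D (Y z) = Y (algebraMap K L ζ * D z + algebraMap K L l * z))
    {w : K} (hw : VGe vK (p * s) w)
    (hW : ((D + 1) ^ p) 1 = 1 + algebraMap K L w)
    (d : ℤ) (hd0 : 0 ≤ d) (hd : d < p * s)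
    (hP : ∀ m z, VGe vL m z → VGe vL (m + d) (D z)) :
    ∀ m z, VGe vL m z → VGe vL (m + (d + 1)) (D z) := by
  have hp2 : (2 : ℤ) ≤ p := by exact_mod_cast hp.out.two_le
  have hDa : ∀ (c : K) (z : L), D (algebraMap K L c * z) = algebraMap K L c * D z := by
    intro c z
    rw [← Algebra.smul_def, map_smul, Algebra.smul_def]
  by_contra! hcon
  obtain ⟨m, z, hz, hDz⟩ := hcon
  let Q : ℤ → Prop := fun j => ∃ z, z ≠ 0 ∧ vL z = j ∧ D z ≠ 0 ∧ vL (D z) = j + d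
  have hQm : Q m := by
    have hz0 : z ≠ 0 := by
      rintro rfl
      apply hDz
      rw [map_zero]; exact vge_zero _
    have hDz0 : D z ≠ 0 := by
      intro h
      apply hDz
      rw [h]; exact vge_zero _
    have h1 : vL z = m := by
      by_contra hne
      have h2 := hz hz0
      have h3 : VGe vL (m + 1) z := fun _ => by omega
      exact hDz ((hP _ _ h3).mono (by omega))
    have h2 : vL (D z) = m + d := by
      by_contra hne
      have h2 := hP _ _ hz hDz0
      exact hDz fun _ => by omega
    exact ⟨z, hz0, h1, hDz0, h2⟩
  have hQall : ∀ j, Q j → ∀ z, z ≠ 0 → vL z = j → D z ≠ 0 ∧ vL (D z) = j + d := by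
    rintro j ⟨z1, hz10, hz1, hDz10, hDz1⟩ z hz0 hz
    obtain ⟨c, hc, hcz⟩ := hres z z1 j hz0 hz (vge_of_eq hz1)
    have h1 := hP _ _ hcz
    rw [map_sub, hDa] at h1
    have h1' := h1.neg hvL
    rw [neg_sub] at h1'
    obtain ⟨h2, h3⟩ := val_of_sub hvL hDz10 hDz1 (h1'.mono (by omega))
    have hDz0 := right_ne_zero_of_mul h2
    refine ⟨hDz0, ?_⟩
    have h4 := hP j z (vge_of_eq hz) hDz0
    have hcL := left_ne_zero_of_mul h2
    have h5 := (vge_ext hext hc) hcL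
    rw [val_mul hvL hcL hDz0] at h3
    omega
  have hQn : ∀ j, Q j → Q (j + n) := by
    rintro j ⟨z1, hz10, hz1, hDz10, hDz1⟩
    obtain ⟨h1, h2⟩ := hY z1 hz10
    have hζL : algebraMap K L ζ ≠ 0 := by simpa using hζ0
    have h3 : algebraMap K L ζ * D z1 ≠ 0 := mul_ne_zero hζL hDz10
    have h4 : vL (algebraMap K L ζ * D z1) = j + d := by
      rw [val_mul hvL hζL hDz10, hext _ hζ0, hζ, hDz1]; ring
    have h5 : VGe vL (j + d + 1) (algebraMap K L l * z1) := by
      refine ((vge_ext hext (vge_of_eq hl)).mul hvL (vge_of_eq hz1)).mono (by omega)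
    obtain ⟨h6, h7⟩ := val_add hvL h3 h4 h5
    obtain ⟨h8, h9⟩ := hY _ h6
    rw [← hDY] at h8 h9
    exact ⟨Y z1, h1, by omega, h8, by omega⟩
  have hQp : ∀ j i, Q j → Q (j + p * i) := by
    rintro j i ⟨z1, hz10, hz1, hDz10, hDz1⟩
    obtain ⟨t, ht0, ht⟩ := exists_val hvK i
    have htL : algebraMap K L t ≠ 0 := by simpa using ht0
    refine ⟨algebraMap K L t * z1, mul_ne_zero htL hz10, ?_, ?_, ?_⟩
    · rw [val_mul hvL htL hz10, hext _ ht0, ht, hz1]; ring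
    · rw [hDa]; exact mul_ne_zero htL hDz10
    · rw [hDa, val_mul hvL htL hDz10, hext _ ht0, ht, hDz1]; ring
  have hQnk : ∀ (k : ℕ) j, Q j → Q (j + n * k) := by
    intro k
    induction k with
    | zero => intro j h; simpa using h
    | succ k ih =>
      intro j h
      have := hQn _ (ih j h)
      push_cast
      rw [mul_add, ← add_assoc, mul_one]
      exact this
  have hQ : ∀ j, Q j := by
    intro j
    have hcop : IsCoprime (n : ℤ) (p : ℤ) := by
      rw [Nat.isCoprime_iff_coprime]
      exact ((Nat.Prime.coprime_iff_not_dvd hp.out).mpr hnp).symm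
    obtain ⟨A, B, hAB⟩ := hcop
    have h1 := Int.emod_nonneg (A * (j - m)) (by omega : (p : ℤ) ≠ 0)
    have h2 := Int.emod_add_mul_ediv (A * (j - m)) p
    obtain ⟨k, hk⟩ := Int.eq_ofNat_of_zero_le h1
    have h3 := hQp _ (B * (j - m) + n * (A * (j - m) / p)) (hQnk k m hQm)
    have h4 : m + n * k + p * (B * (j - m) + n * (A * (j - m) / p)) = j := by
      rw [hk] at h2
      linear_combination (j - m) * hAB + n * h2
    rwa [h4] at h3
  have hpow : ∀ k : ℕ, (D ^ k) 1 ≠ 0 ∧ vL ((D ^ k) 1) = k * d := by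
    intro k
    induction k with
    | zero => simp [val_one hvL]
    | succ k ih =>
      rw [pow_succ', Module.End.mul_apply]
      obtain ⟨h1, h2⟩ := hQall _ (hQ _) _ ih.1 ih.2
      refine ⟨h1, ?_⟩
      rw [h2]; push_cast; ring
  -- contradiction
  have hbin : (D ^ p) 1 = algebraMap K L w -
      ∑ k ∈ Finset.Ico 1 p, ((p.choose k : ℕ) : L) * (D ^ k) 1 := by
    have h1 := (Commute.one_right D).add_pow p
    rw [h1] at hW
    simp only [one_pow, mul_one, LinearMap.sum_apply] at hW
    rw [Finset.sum_range_succ, Finset.range_eq_Ico,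
      Finset.sum_eq_sum_Ico_succ_bot hp.out.pos] at hW
    simp only [Nat.choose_self, Nat.choose_zero_right, Nat.cast_one, mul_one, pow_zero,
      Module.End.one_apply, zero_add] at hW
    have h2 : ∀ k, (D ^ k * ((p.choose k : ℕ) : Module.End K L)) 1 =
        ((p.choose k : ℕ) : L) * (D ^ k) 1 := by
      intro k
      rw [← Nat.cast_comm, Module.End.mul_apply, Module.End.natCast_apply, nsmul_eq_mul]
    simp only [h2] at hW
    linear_combination hW
  obtain ⟨h1, h2⟩ := hpow p
  have h3 : VGe vL (p * d + 1) ((D ^ p) 1) := by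
    rw [hbin]
    refine ((vge_ext hext hw).mono ?_).sub hvL (VGe.sum hvL _ _ fun k hk => ?_)
    · nlinarith
    · rw [Finset.mem_Ico] at hk
      refine ((val_choose hvL hk.1 hk.2).mul hvL (vge_of_eq (hpow k).2)).mono ?_
      have : (1 : ℤ) ≤ k := by exact_mod_cast hk.1
      rw [hpL]
      nlinarith
  have := h3 h1
  omega

theorem core (hvK : IsNormalizedVal p K vK) (hvL : IsNormalizedVal p L vL)
    (hext : ∀ x : K, x ≠ 0 → vL (algebraMap K L x) = (p : ℤ) * vK x)
    (hres : ∀ (z z' : L) (m : ℤ), z ≠ 0 → vL z = m → VGe vL m z' →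
      ∃ c : K, VGe vK 0 c ∧ VGe vL (m + 1) (z' - algebraMap K L c * z))
    {n : ℕ} (hnp : ¬ p ∣ n) {s : ℤ} (hs : 0 < s)
    {l ζ : K} (hl0 : l ≠ 0) (hl : vK l = s) (hζ0 : ζ ≠ 0) (hζ : vK ζ = 0)
    (hpL : vL (p : L) = p * (((p : ℤ) - 1) * s))
    (D : Module.End K L) (Y : L → L) (hY : ∀ z, z ≠ 0 → Y z ≠ 0 ∧ vL (Y z) = vL z + n)
    (hDY : ∀ z, D (Y z) = Y (algebraMap K L ζ * D z + algebraMap K L l * z))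
    {w : K} (hw : VGe vK (p * s) w)
    (hW : ((D + 1) ^ p) 1 = 1 + algebraMap K L w)
    (hP0 : ∀ m z, VGe vL m z → VGe vL m (D z)) :
    ∃ c, VGe vK 0 c ∧ VGe vK (p * s + 1) (1 + w - (1 + l * c) ^ p) := by
  have hp2 : (2 : ℤ) ≤ p := by exact_mod_cast hp.out.two_le
  have hDa : ∀ (c : K) (z : L), D (algebraMap K L c * z) = algebraMap K L c * D z := by
    intro c z
    rw [← Algebra.smul_def, map_smul, Algebra.smul_def]
  have hps0 : 0 < (p : ℤ) * s := by positivity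
  have hall : ∀ d : ℕ, (d : ℤ) ≤ p * s → ∀ m z, VGe vL m z → VGe vL (m + d) (D z) := by
    intro d
    induction d with
    | zero => intro _ m z h; simpa using hP0 m z h
    | succ d ih =>
      intro hd
      push_cast at hd ⊢
      exact core_step hvK hvL hext hres hnp hs hl0 hl hζ0 hζ hpL D Y hY hDY hw hW d
        (by positivity) (by omega) (ih (by omega))
  have hP : ∀ m z, VGe vL m z → VGe vL (m + p * s) (D z) := by
    have := hall (p * s).toNat (by omega)
    rwa [Int.toNat_of_nonneg hps0.le] at this
  have hone : VGe vL 0 (1 : L) := vge_of_eq (val_one hvL)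
  have hlL : algebraMap K L l ≠ 0 := by simpa using hl0
  have hvlL : vL (algebraMap K L l) = p * s := by rw [hext _ hl0, hl]
  obtain ⟨c, hc, hcD⟩ := hres (algebraMap K L l) (D 1) (p * s) hlL hvlL (by simpa using hP _ _ hone)
  refine ⟨c, hc, ?_⟩
  have hlc : VGe vK s (l * c) := by simpa using (vge_of_eq hl).mul hvK hc
  have hpow : ∀ k : ℕ, VGe vL (k * (p * s) + 1) ((D ^ k) 1 - algebraMap K L ((l * c) ^ k)) := by
    intro k
    induction k with
    | zero => simpa using vge_zero 1
    | succ k ih =>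
      have h1 := hP _ _ ih
      have h2 := (vge_ext hext (hlc.pow hvK k)).mul hvL hcD
      have h3 : (D ^ (k + 1)) 1 - algebraMap K L ((l * c) ^ (k + 1)) =
          D ((D ^ k) 1 - algebraMap K L ((l * c) ^ k)) +
            algebraMap K L ((l * c) ^ k) * (D 1 - algebraMap K L c * algebraMap K L l) := by
        have h4 := hDa ((l * c) ^ k) 1
        rw [mul_one] at h4
        rw [pow_succ', Module.End.mul_apply, map_sub, h4, pow_succ (l * c), map_mul, map_mul]
        ring
      rw [h3]
      refine (h1.mono ?_).add hvL (h2.mono ?_)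
      · push_cast; nlinarith
      · push_cast; nlinarith
  have hsum : algebraMap K L (1 + w - (1 + l * c) ^ p) = ∑ k ∈ Finset.Ico 1 (p + 1),
      ((p.choose k : ℕ) : L) * ((D ^ k) 1 - algebraMap K L ((l * c) ^ k)) := by
    have h1 := (Commute.one_right D).add_pow p
    rw [h1] at hW
    simp only [one_pow, mul_one, LinearMap.sum_apply] at hW
    rw [Finset.range_eq_Ico, Finset.sum_eq_sum_Ico_succ_bot (by omega)] at hW
    simp only [Nat.choose_zero_right, Nat.cast_one, mul_one, pow_zero,
      Module.End.one_apply, zero_add] at hW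
    have h2 : ∀ k, (D ^ k * ((p.choose k : ℕ) : Module.End K L)) 1 =
        ((p.choose k : ℕ) : L) * (D ^ k) 1 := by
      intro k
      rw [← Nat.cast_comm, Module.End.mul_apply, Module.End.natCast_apply, nsmul_eq_mul]
    simp only [h2] at hW
    simp only [mul_sub, Finset.sum_sub_distrib]
    rw [binom1, map_sub, map_add, map_add, map_one, ← hW, map_sum]
    simp only [map_mul, map_natCast]
    have h3 : ∀ k, algebraMap K L ((l * c) ^ k) * ((p.choose k : ℕ) : L) =
        ((p.choose k : ℕ) : L) * algebraMap K L ((l * c) ^ k) := fun k => mul_comm _ _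
    simp only [map_pow, map_mul] at h3 ⊢
    simp only [h3]
    ring
  have hgeL : VGe vL (p * (p * s) + 1) (algebraMap K L (1 + w - (1 + l * c) ^ p)) := by
    rw [hsum]
    refine VGe.sum hvL _ _ fun k hk => ?_
    rw [Finset.mem_Ico] at hk
    have hk1 : (1 : ℤ) ≤ k := by exact_mod_cast hk.1
    rcases Nat.lt_succ_iff_lt_or_eq.mp hk.2 with h | h
    · refine ((val_choose hvL hk.1 h).mul hvL (hpow k)).mono ?_
      rw [hpL]
      nlinarith
    · subst h
      simpa using hpow k
  intro hne
  have h1 := hgeL ((map_ne_zero (algebraMap K L)).mpr hne)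
  rw [hext _ hne] at h1
  by_contra hlt
  nlinarith

end core

section gal
variable {p : ℕ} [hp : Fact p.Prime] {K : Type*} [Field K] {vK : K → ℤ} {L : Type*} [Field L]
  [Algebra K L] {vL : L → ℤ}

theorem prod_one_sub {R : Type*} [CommRing R] [IsDomain R] {ζ : R} {n : ℕ} (hn : 0 < n)
    (hζ : IsPrimitiveRoot ζ n) (α : R) :
    ∏ i ∈ Finset.range n, (1 - ζ ^ i * α) = 1 - α ^ n := by
  have h := congrArg (Polynomial.eval 1) (X_pow_sub_C_eq_prod hζ hn (α := α) rfl)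
  simpa [Polynomial.eval_prod] using h.symm

theorem exists_sigma [FiniteDimensional K L] (hfr : Module.finrank K L = p) {ζ : K}
    (hζ : IsPrimitiveRoot ζ p) {κ : K} {θ : L} (hθ : θ ^ p = algebraMap K L κ)
    (hLθ : IntermediateField.adjoin K {θ} = ⊤) :
    ∃ σ : Gal(L/K), σ θ = algebraMap K L ζ * θ ∧ σ ^ p = 1 ∧
      ∀ x : L, algebraMap K L (Algebra.norm K x) = ∏ i ∈ Finset.range p, (σ ^ i) x := by
  classical
  have hprim : (primitiveRoots p K).Nonempty := ⟨ζ, (mem_primitiveRoots hp.out.pos).mpr hζ⟩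
  have H : Irreducible (Polynomial.X ^ p - Polynomial.C κ) := by
    have := irreducible_X_pow_sub_C_of_root_adjoin_eq_top (K := K) (L := L) (a := κ) (α := θ)
      (by rw [hfr]; exact hθ) hLθ
    rwa [hfr] at this
  have hsp : Polynomial.IsSplittingField K L (Polynomial.X ^ p - Polynomial.C κ) := by
    have := isSplittingField_X_pow_sub_C_of_root_adjoin_eq_top (K := K) (L := L) (a := κ) (α := θ)
      (by rw [hfr]; exact hprim) (by rw [hfr]; exact hθ) hLθ
    rwa [hfr] at this
  have hgal : IsGalois K L := isGalois_of_isSplittingField_X_pow_sub_C hprim H L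
  have hp0 : NeZero p := ⟨hp.out.ne_zero⟩
  obtain ⟨σ, hσ⟩ : ∃ σ : Gal(L/K), σ θ = algebraMap K L ζ * θ := by
    refine ⟨_, (autEquivZmod_symm_apply_natCast H L hθ hζ 1).trans ?_⟩
    rw [pow_one, Algebra.smul_def]
  have hcard : Nat.card Gal(L/K) = p := by rw [IsGalois.card_aut_eq_finrank, hfr]
  have hσp : σ ^ p = 1 := by
    rw [← hcard]; exact pow_card_eq_one'
  have hθ0 : θ ≠ 0 := by
    rintro rfl
    have h1 : IntermediateField.adjoin K {(0 : L)} = ⊥ := by simp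
    rw [h1] at hLθ
    have h2 : Module.finrank K L = 1 := by
      rw [← IntermediateField.finrank_top', ← hLθ]; exact IntermediateField.finrank_bot
    rw [hfr] at h2
    exact hp.out.one_lt.ne' h2
  have hσ1 : σ ≠ 1 := by
    rintro rfl
    rw [AlgEquiv.one_apply] at hσ
    have h1 : algebraMap K L ζ = 1 := mul_right_cancel₀ hθ0 (by rw [one_mul]; exact hσ.symm)
    have h2 : ζ = 1 := (algebraMap K L).injective (by rw [h1, map_one])
    exact hζ.ne_one hp.out.one_lt h2
  have hord : orderOf σ = p := orderOf_eq_prime hσp hσ1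
  have hgen : ∀ g : Gal(L/K), g ∈ Subgroup.zpowers σ := by
    intro g
    have : Subgroup.zpowers σ = ⊤ := by
      apply Subgroup.eq_top_of_card_eq
      rw [Nat.card_zpowers, hord, hcard]
    rw [this]; trivial
  refine ⟨σ, hσ, hσp, fun x => ?_⟩
  rw [Algebra.norm_eq_prod_automorphisms, ← IsCyclic.image_range_orderOf hgen, hord,
    Finset.prod_image]
  intro i hi j hj hij
  refine pow_injOn_Iio_orderOf ?_ ?_ hij
  · rw [hord]; simpa using hi
  · rw [hord]; simpa using hj

theorem sigma_pow_theta {ζ : K} {θ : L} {σ : Gal(L/K)} (hσ : σ θ = algebraMap K L ζ * θ) (i : ℕ) :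
    (σ ^ i) θ = algebraMap K L ζ ^ i * θ := by
  induction i with
  | zero => simp
  | succ i ih =>
    rw [pow_succ', AlgEquiv.mul_apply, ih, map_mul, map_pow, AlgEquiv.commutes, hσ]; ring

theorem norm_one_sub {ζ : K} (hζ : IsPrimitiveRoot ζ p) {κ : K} {θ : L}
    (hθ : θ ^ p = algebraMap K L κ) {σ : Gal(L/K)} (hσ : σ θ = algebraMap K L ζ * θ)
    (hN : ∀ x : L, algebraMap K L (Algebra.norm K x) = ∏ i ∈ Finset.range p, (σ ^ i) x) (c : K) :
    Algebra.norm K (1 - algebraMap K L c * θ) = 1 - c ^ p * κ := by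
  apply (algebraMap K L).injective
  rw [hN]
  have h1 : ∀ i, (σ ^ i) (1 - algebraMap K L c * θ) =
      1 - algebraMap K L ζ ^ i * (algebraMap K L c * θ) := by
    intro i
    rw [map_sub, map_one, map_mul, AlgEquiv.commutes, sigma_pow_theta hσ]; ring
  simp only [h1]
  rw [prod_one_sub hp.out.pos (hζ.map_of_injective (algebraMap K L).injective), mul_pow, hθ]
  simp

theorem sigma_val [FiniteDimensional K L] (hvL : IsNormalizedVal p L vL)
    (hfr : Module.finrank K L = p)
    (hext : ∀ x : K, x ≠ 0 → vL (algebraMap K L x) = (p : ℤ) * vK x)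
    {n : ℕ} (hnp : ¬ (p ∣ n)) {y : L} (hy0 : y ≠ 0) (hy : vL y = n)
    {σ : Gal(L/K)} (hσp : σ ^ p = 1) (hσy : VGe vL (n + 1) (σ y - y))
    (z : L) (hz : z ≠ 0) : vL (σ z) = vL z := by
  obtain ⟨hs0, hs⟩ := val_of_sub hvL hy0 hy hσy
  have key : ∀ z : L, z ≠ 0 → vL z ≤ vL (σ z) := by
    intro z hz
    obtain ⟨c, hc, hinj⟩ := expand hvL hfr hext hnp hy0 hy z
    have hge := vge_dom hvL Finset.univ _ hinj (m := vL z) (by rw [← hc]; exact vge_of_eq rfl)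
    have h1 : VGe vL (vL z) (σ z) := by
      conv_rhs => rw [hc]
      rw [map_sum]
      refine VGe.sum hvL _ _ fun i hi => ?_
      have h2 := hge i hi
      rw [map_mul, AlgEquiv.commutes, map_pow]
      intro hne
      have hcl := left_ne_zero_of_mul hne
      have h3 := h2 (mul_ne_zero hcl (pow_ne_zero _ hy0))
      rw [val_mul hvL hcl (pow_ne_zero _ hy0), val_pow hvL hy0, hy] at h3
      rw [val_mul hvL hcl (pow_ne_zero _ hs0), val_pow hvL hs0, hs]
      exact h3
    exact h1 (by simpa using hz)
  have hk : ∀ k : ℕ, ∀ z : L, z ≠ 0 → vL z ≤ vL ((σ ^ k) z) := by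
    intro k
    induction k with
    | zero => intro z _; simp
    | succ k ih =>
      intro z hz
      rw [pow_succ', AlgEquiv.mul_apply]
      exact (ih z hz).trans (key _ ((map_ne_zero (σ ^ k)).mpr hz))
  refine le_antisymm ?_ (key z hz)
  have h1 := hk (p - 1) (σ z) (by simpa using hz)
  rw [← AlgEquiv.mul_apply, ← pow_succ, Nat.sub_add_cancel hp.out.one_lt.le, hσp,
    AlgEquiv.one_apply] at h1
  exact h1

theorem W_pow {ζ : K} (hζ : IsPrimitiveRoot ζ p) (Xi Y : Module.End K L)
    (hc : Y * Xi = ζ⁻¹ • (Xi * Y)) {κi γ : K} (hX : Xi ^ p = algebraMap K _ κi)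
    (hY : Y ^ p = algebraMap K _ γ) :
    (Xi * (1 - Y)) ^ p = algebraMap K _ (κi * (1 - γ)) := by
  have h1 : ∀ k : ℕ, Y * Xi ^ k = (ζ⁻¹) ^ k • (Xi ^ k * Y) := by
    intro k
    induction k with
    | zero => simp
    | succ k ih =>
      rw [pow_succ, ← mul_assoc, ih, smul_mul_assoc, mul_assoc, hc, mul_smul_comm, smul_smul,
        ← mul_assoc, ← pow_succ]
  let q : ℕ → Polynomial K := fun k =>
    ∏ i ∈ Finset.range k, (1 - (Polynomial.C ζ⁻¹) ^ i * Polynomial.X)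
  have h2 : ∀ k : ℕ, (Xi * (1 - Y)) ^ k = Xi ^ k * Polynomial.aeval Y (q k) := by
    intro k
    induction k with
    | zero => simp [q]
    | succ k ih =>
      have h3 : q (k + 1) = (1 - (Polynomial.C ζ⁻¹) ^ k * Polynomial.X) * q k := by
        simp only [q]
        rw [Finset.prod_range_succ, mul_comm]
      have h4 : Polynomial.aeval Y (1 - (Polynomial.C ζ⁻¹) ^ k * Polynomial.X) =
          1 - (ζ⁻¹) ^ k • Y := by
        rw [← map_pow, ← Polynomial.smul_eq_C_mul]
        simp
      rw [pow_succ', ih, h3, map_mul, h4, mul_assoc, ← mul_assoc (1 - Y), sub_mul, one_mul, h1,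
        pow_succ', mul_assoc Xi, ← mul_assoc (Xi ^ k), mul_sub, mul_one, mul_smul_comm]
  have hprim : IsPrimitiveRoot (Polynomial.C ζ⁻¹) p :=
    hζ.inv.map_of_injective Polynomial.C_injective
  have h3 : q p = 1 - Polynomial.X ^ p := prod_one_sub hp.out.pos hprim Polynomial.X
  rw [h2, h3, map_sub, map_one, map_pow, Polynomial.aeval_X, hX, hY, map_mul, map_sub, map_one]

/-- The key obstruction. -/
theorem nonnorm [FiniteDimensional K L] (hvK : IsNormalizedVal p K vK)
    (hvL : IsNormalizedVal p L vL) (hfr : Module.finrank K L = p)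
    (hext : ∀ x : K, x ≠ 0 → vL (algebraMap K L x) = (p : ℤ) * vK x)
    {n : ℕ} (hn1 : 1 ≤ n) (hnp : ¬ (p ∣ n)) {s : ℤ} (hs : 0 < s) (hns : (n : ℤ) < p * s)
    (hp0 : (p : K) ≠ 0) (hps : vK (p : K) = ((p : ℤ) - 1) * s)
    {ζ : K} (hζ : IsPrimitiveRoot ζ p) (hl : vK (ζ - 1) = s)
    {κ : K} {θ : L} (hθ : θ ^ p = algebraMap K L κ)
    (hy0 : θ - 1 ≠ 0) (hy : vL (θ - 1) = n)
    {σ : Gal(L/K)} (hσ : σ θ = algebraMap K L ζ * θ) (hσp : σ ^ p = 1)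
    (hN : ∀ x : L, algebraMap K L (Algebra.norm K x) = ∏ i ∈ Finset.range p, (σ ^ i) x)
    {w : K} (hw : VGe vK (p * s) w) {γ : K} (hγ : γ = 1 - κ * (1 + w)) (hvγ : vK γ = n)
    {x : L} (hx0 : x ≠ 0) (hx : Algebra.norm K x = γ) :
    ∃ c, VGe vK 0 c ∧ VGe vK (p * s + 1) (1 + w - (1 + (ζ - 1) * c) ^ p) := by
  have hpp : (0 : ℤ) < p := by exact_mod_cast hp.out.pos
  have hl0 : ζ - 1 ≠ 0 := sub_ne_zero.mpr (hζ.ne_one hp.out.one_lt)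
  have hζ0 : ζ ≠ 0 := hζ.ne_zero hp.out.ne_zero
  have hζL : algebraMap K L ζ ≠ 0 := by simpa using hζ0
  have hvζ : vK ζ = 0 := (vge_unit hvK ((vge_of_eq hl).mono (by omega))).2
  have hpL : vL (p : L) = p * (((p : ℤ) - 1) * s) := by
    have := hext (p : K) hp0
    rwa [map_natCast, hps] at this
  obtain ⟨hθ0, hvθ⟩ := vge_unit hvL ((vge_of_eq hy).mono (by omega : (1 : ℤ) ≤ n))
  have hσy : VGe vL (n + 1) (σ (θ - 1) - (θ - 1)) := by
    have h1 : σ (θ - 1) - (θ - 1) = algebraMap K L (ζ - 1) * θ := by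
      rw [map_sub, map_one, hσ, map_sub, map_one]; ring
    rw [h1]
    refine ((vge_ext hext (vge_of_eq hl)).mul hvL (vge_of_eq hvθ)).mono (by omega)
  have hσv : ∀ z, z ≠ 0 → vL (σ z) = vL z := sigma_val hvL hfr hext hnp hy0 hy hσp hσy
  have hσk : ∀ (k : ℕ) z, z ≠ 0 → vL ((σ ^ k) z) = vL z := by
    intro k
    induction k with
    | zero => intro z _; simp
    | succ k ih =>
      intro z hz
      rw [pow_succ', AlgEquiv.mul_apply, hσv _ ((map_ne_zero (σ ^ k)).mpr hz), ih z hz]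
  have hγ0 : γ ≠ 0 := by
    rw [← hx]; exact Algebra.norm_ne_zero_iff.mpr hx0
  have hprod : ∀ k : ℕ, ∏ i ∈ Finset.range k, (σ ^ i) x ≠ 0 ∧
      vL (∏ i ∈ Finset.range k, (σ ^ i) x) = k * vL x := by
    intro k
    induction k with
    | zero => simp [val_one hvL]
    | succ k ih =>
      have h0 : (σ ^ k) x ≠ 0 := (map_ne_zero (σ ^ k)).mpr hx0
      rw [Finset.prod_range_succ]
      refine ⟨mul_ne_zero ih.1 h0, ?_⟩
      rw [val_mul hvL ih.1 h0, ih.2, hσk k x hx0]; push_cast; ring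
  have hvx : vL x = n := by
    have h1 := (hprod p).2
    rw [← hN, hx, hext _ hγ0, hvγ] at h1
    exact (mul_left_cancel₀ hpp.ne' h1).symm
  let Y : Module.End K L := LinearMap.mulLeft K x * σ.toLinearMap
  let Xi : Module.End K L := LinearMap.mulLeft K θ⁻¹
  have hYa : ∀ z, Y z = x * σ z := fun z => rfl
  have hXa : ∀ z, Xi z = θ⁻¹ * z := fun z => rfl
  have hσi : σ θ⁻¹ = (algebraMap K L ζ)⁻¹ * θ⁻¹ := by
    rw [map_inv₀, hσ, mul_inv]
  have hcomm : Y * Xi = ζ⁻¹ • (Xi * Y) := by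
    ext z
    change x * σ (θ⁻¹ * z) = ζ⁻¹ • (θ⁻¹ * (x * σ z))
    rw [map_mul, hσi, Algebra.smul_def, map_inv₀]
    ring
  have hYk : ∀ (k : ℕ) z, (Y ^ k) z = (∏ i ∈ Finset.range k, (σ ^ i) x) * (σ ^ k) z := by
    intro k
    induction k with
    | zero => intro z; simp
    | succ k ih =>
      intro z
      rw [pow_succ', Module.End.mul_apply, ih, hYa, map_mul, Finset.prod_range_succ', map_prod]
      simp only [pow_succ', AlgEquiv.mul_apply, pow_zero, AlgEquiv.one_apply]
      ring
  have hYp : Y ^ p = algebraMap K _ γ := by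
    ext z
    rw [hYk, ← hN, hx, hσp, AlgEquiv.one_apply, Module.algebraMap_end_apply, Algebra.smul_def]
  have hκ0 : κ ≠ 0 := by
    intro h
    rw [h, map_zero] at hθ
    exact hθ0 (pow_eq_zero_iff hp.out.ne_zero |>.mp hθ)
  have hXp : Xi ^ p = algebraMap K _ κ⁻¹ := by
    ext z
    have : ∀ k : ℕ, (Xi ^ k) z = (θ⁻¹) ^ k * z := by
      intro k
      induction k with
      | zero => simp
      | succ k ih => rw [pow_succ', Module.End.mul_apply, ih, hXa]; ring
    rw [this, inv_pow, hθ, Module.algebraMap_end_apply, Algebra.smul_def, map_inv₀]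
  have hWp := W_pow hζ Xi Y hcomm hXp hYp
  have hγκ : κ⁻¹ * (1 - γ) = 1 + w := by
    rw [hγ]; field_simp; ring
  rw [hγκ] at hWp
  have hYv : ∀ z, z ≠ 0 → Y z ≠ 0 ∧ vL (Y z) = vL z + n := by
    intro z hz
    have h0 : σ z ≠ 0 := by simpa using hz
    rw [hYa]
    refine ⟨mul_ne_zero hx0 h0, ?_⟩
    rw [val_mul hvL hx0 h0, hvx, hσv z hz]; ring
  have hYg : ∀ m z, VGe vL m z → VGe vL (m + n) (Y z) := by
    intro m z hz
    by_cases h : z = 0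
    · rw [h, map_zero]; exact vge_zero _
    · intro _
      rw [(hYv z h).2]
      have := hz h
      omega
  refine core hvK hvL hext
    (fun z z' m hz0 hz hz' => residue_eq hvK hvL hfr hext hnp hy0 hy hz0 hz hz')
    hnp hs hl0 hl hζ0 hvζ hpL (Xi * (1 - Y) - 1) Y hYv ?_ hw ?_ ?_
  · intro z
    simp only [LinearMap.sub_apply, Module.End.mul_apply, Module.End.one_apply, hYa, hXa,
      map_sub, map_add, map_mul, hσi, AlgEquiv.commutes, map_one]
    field_simp
    ring
  · rw [sub_add_cancel, hWp, Module.algebraMap_end_apply, Algebra.smul_def, mul_one, map_add,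
      map_one]
  · intro m z hz
    have h1 := (hYg m z hz).mono (by omega : m ≤ m + n)
    have h2 : VGe vL 0 θ⁻¹ := vge_of_eq (by rw [val_inv hvL hθ0, hvθ, neg_zero])
    simp only [LinearMap.sub_apply, Module.End.mul_apply, Module.End.one_apply, hXa]
    refine VGe.sub hvL ?_ hz
    simpa using h2.mul hvL (hz.sub hvL h1)

end gal

theorem kummer_extension_unit_conductor
    (p : ℕ) [Fact p.Prime]
    (K : Type*) [Field K] [Algebra ℚ_[p] K] [FiniteDimensional ℚ_[p] K]
    (vK : K → ℤ) (hvK : IsNormalizedVal p K vK)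
    (hμ : ∃ ζ : K, IsPrimitiveRoot ζ p)
    (π u : K) (hπ0 : π ≠ 0) (hπ : vK π = 1) (hu0 : u ≠ 0) (hu : vK u = 0)
    (n : ℕ) (hn1 : 1 ≤ n) (hnp : ¬ (p ∣ n))
    (hnlt : ((p : ℤ) - 1) * n < (p : ℤ) * vK ((p : K)))
    (κ : K) (hκdef : κ = 1 + u * π ^ n)
    (L : Type v) [Field L] [Algebra K L]
    (θ : L) (hθ : θ ^ p = algebraMap K L κ)
    (hLθ : IntermediateField.adjoin K {θ} = ⊤)
    (vL : L → ℤ) (hvL : IsNormalizedVal p L vL)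
    (hext : ∃ e : ℤ, 0 < e ∧ ∀ x : K, x ≠ 0 → vL (algebraMap K L x) = e * vK x) :
    Module.finrank K L = p ∧
    (∀ x : K, x ≠ 0 → vL (algebraMap K L x) = (p : ℤ) * vK x) ∧
    ((p : ℤ) - 1) * ((condExp vK L : ℤ) + n - 1) = (p : ℤ) * vK ((p : K)) := by
  have hpr : p.Prime := Fact.out
  have hp2 : (2 : ℤ) ≤ p := by exact_mod_cast hpr.two_le
  obtain ⟨ζ, hζ⟩ := hμ
  have hp0 : (p : K) ≠ 0 := by
    rw [← map_natCast (algebraMap ℚ_[p] K) p]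
    exact (map_ne_zero _).mpr (Nat.cast_ne_zero.mpr hpr.ne_zero)
  obtain ⟨hs, hps⟩ := val_zeta hvK hp0 hζ
  generalize hl : vK (ζ - 1) = s at hs hps
  have hns : (n : ℤ) < p * s := by
    rw [hps] at hnlt
    have : ((p : ℤ) - 1) * n < ((p : ℤ) - 1) * (p * s) := by linarith
    exact lt_of_mul_lt_mul_left this (by omega)
  obtain ⟨hfin, hcomp⟩ := analytic_facts (p := p) hvK
  generalize ha' : u * π ^ n = a at hκdef
  have ha0 : a ≠ 0 := by rw [← ha']; exact mul_ne_zero hu0 (pow_ne_zero _ hπ0)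
  have ha : vK a = n := by
    rw [← ha', val_mul hvK hu0 (pow_ne_zero _ hπ0), val_pow hvK hπ0, hu, hπ]; ring
  obtain ⟨e, he, hext⟩ := hext
  obtain ⟨hfd, hfr, rfl, hy0, hy⟩ :=
    ramify hvL hs hps hp0 ha0 ha hnp hns hκdef hθ hLθ he hext
  refine ⟨hfr, hext, ?_⟩
  obtain ⟨hκ0, hvκ⟩ : κ ≠ 0 ∧ vK κ = 0 := by
    apply vge_unit hvK
    rw [hκdef, add_sub_cancel_left]
    exact (vge_of_eq ha).mono (by omega)
  obtain ⟨σ, hσ, hσp, hN⟩ := exists_sigma hfr hζ hθ hLθ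
  have hN1 : Algebra.norm K (1 - θ) = -a := by
    have := norm_one_sub hζ hθ hσ hN 1
    rw [map_one, one_mul, one_pow, one_mul, hκdef] at this
    rw [this]; ring
  obtain ⟨t, ht⟩ : ∃ t : ℕ, (t : ℤ) = p * s - n := ⟨(p * s - n).toNat, by omega⟩
  have hmem : ∀ U : K, U ≠ 0 → vK U = 0 → (t + 1 = 0 ∨ U = 1 ∨ ((t + 1 : ℕ) : ℤ) ≤ vK (U - 1)) →
      ∃ x : L, x ≠ 0 ∧ Algebra.norm K x = U := by
    rintro U hU0 - hU
    have hb : VGe vK (t + 1) (U - 1) := by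
      rcases hU with h | h | h
      · omega
      · rw [h, sub_self]; exact vge_zero _
      · intro _; push_cast at h; exact h
    have hw : VGe vK (p * s + 1) (a * (U - 1) * κ⁻¹) := by
      refine (((vge_of_eq ha).mul hvK hb).mul hvK (vge_of_eq (val_inv hvK hκ0))).mono ?_
      omega
    obtain ⟨c, hc⟩ := pth_power hvK hp0 hs hps hcomp hw
    have hnx : Algebra.norm K ((1 - algebraMap K L c * θ) / (1 - θ)) = U := by
      have h1θ : 1 - θ ≠ 0 := by
        intro h; apply hy0; linear_combination -h
      have h1 : Algebra.norm K ((1 - algebraMap K L c * θ) / (1 - θ)) * (-a) = U * (-a) := by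
        rw [← hN1, ← map_mul, div_mul_cancel₀ _ h1θ, hN1, norm_one_sub hζ hθ hσ hN, hc]
        field_simp
        rw [hκdef]; ring
      exact mul_right_cancel₀ (neg_ne_zero.mpr ha0) h1
    refine ⟨_, ?_, hnx⟩
    intro h
    rw [h, Algebra.norm_zero] at hnx
    exact hU0 hnx.symm
  have hnot : ∀ m : ℕ, m ≤ t → ¬ ∀ U : K, U ≠ 0 → vK U = 0 →
      (m = 0 ∨ U = 1 ∨ (m : ℤ) ≤ vK (U - 1)) → ∃ x : L, x ≠ 0 ∧ Algebra.norm K x = U := by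
    intro m hm hall
    obtain ⟨w, hw, hwc⟩ := exists_beta hvK hζ hs hl hps hfin
    have hb : VGe vK t (w * κ * a⁻¹) := by
      refine ((hw.mul hvK (vge_of_eq hvκ)).mul hvK (vge_of_eq (val_inv hvK ha0))).mono ?_
      omega
    generalize hbd : w * κ * a⁻¹ = b at hb
    have hbw : a * b = w * κ := by rw [← hbd]; field_simp
    obtain ⟨hU0, hvU⟩ := vge_unit hvK (x := 1 + b)
      (by rw [add_sub_cancel_left]; exact hb.mono (by omega))
    obtain ⟨x, hx0, hx⟩ := hall (1 + b) hU0 hvU (by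
      rw [add_sub_cancel_left]
      by_cases h : b = 0
      · right; left; rw [h, add_zero]
      · right; right
        have := hb h
        omega)
    have hx1 : Algebra.norm K (x * (1 - θ)) = 1 - κ * (1 + w) := by
      rw [map_mul, hx, hN1]
      linear_combination -hbw + hκdef
    have h1θ : 1 - θ ≠ 0 := by
      intro h; apply hy0; linear_combination -h
    have hγ : vK (1 - κ * (1 + w)) = n := by
      refine (val_of_sub hvK (neg_ne_zero.mpr ha0) (by rw [val_neg hvK ha0, ha]) ?_).2
      have : 1 - κ * (1 + w) - -a = -(w * κ) := by rw [hκdef]; ring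
      rw [this]
      refine (VGe.neg hvK (hw.mul hvK (vge_of_eq hvκ))).mono (by omega)
    obtain ⟨c, hc0, hc⟩ := nonnorm hvK hvL hfr hext hn1 hnp hs hns hp0 hps hζ hl hθ hy0 hy hσ hσp
      hN hw rfl hγ (mul_ne_zero hx0 h1θ) hx1
    exact hwc c hc0 hc
  have hcond : condExp vK L = t + 1 := by
    unfold condExp
    apply le_antisymm
    · exact Nat.sInf_le hmem
    · by_contra! hlt
      have hin := Nat.sInf_mem (s := {n : ℕ | ∀ u : K, u ≠ 0 → vK u = 0 →
        (n = 0 ∨ u = 1 ∨ (n : ℤ) ≤ vK (u - 1)) → ∃ x : L, x ≠ 0 ∧ Algebra.norm K x = u})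
        ⟨t + 1, hmem⟩
      exact hnot _ (Nat.lt_succ_iff.mp hlt) hin
  rw [hcond, hps]
  push_cast
  rw [ht]; ring
end
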